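/- arXiv:2106.13653 — 2 statements merged into one kernel-verified Lean document; each statement's English description precedes it below -/
import Mathlib

section
/- Let F be a totally real number field with ring of integers O. For every tuple τ₀ = (τ₀,σ)_σ of points of the upper half-plane ℍ indexed by the real embeddings σ : F → ℝ, there exists a nonzero even, totally positive, ℤ-unimodular O-lattice (L, Q) such that θ_L(τ₀) := Σ_{λ ∈ L} exp( 2πi Σ_σ σ(Q(λ)) · τ₀,σ ) ≠ 0. In other words, the Hilbert theta series of totally positive even ℤ-unimodular O-lattices have no common zero on ℍ^d. -/
/-!
The idea is to exhibit one lattice whose theta series is visibly nonzero at `τ₀` and to recover its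
theta series from those of even unimodular lattices.

Let `N` be an integer clearing the inverse different `𝔡⁻¹`, let `𝔭` be a prime of `F` with residue
field `k` of order `q`, and let `t` be a positive integer in `𝔭`. Left multiplication by an integral
quaternion of norm `4N²t² - 1`, which exists by the four squares theorem, is a matrix `A` with
`A Aᵀ = 4N²t² - 1`. On `V = F⁴ × F⁴` with the totally positive form `(v₁·v₁ + v₂·v₂) / 4N`, write
`v = (2N w + A x, x)`. The form becomes `N w·w + x·Aᵀw + N t² x·x`. The module of all `v` with `x` in
`𝔭⁻¹` and `w` in `𝔡⁻¹` contains the small lattice, where `x` is integral and `w` lies in `𝔭𝔡⁻¹`. The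
quotient is `k⁴ × k⁴`, and modulo `𝔡⁻¹` the form is the hyperbolic form `y·η` there
(`LocalData.qf_mod`). Hence the lattices between the two that correspond to self-dual subspaces `C`
are even and unimodular (`LocalData.lat_even`, `LocalData.lat_dual`).

Among the self-dual subspaces are the graphs of alternating matrices and the vertical space. Counted
with suitable multiplicities they cover the origin and the quadric `y·η = 0` uniformly
(`LocalData.count_identity`). Detecting the quadric by additive characters of `k` gives a linear
relation: if all the unimodular theta series vanish at `τ`, then so does `q^r` times the theta series
of the small lattice plus the sum, over representatives `a` of `k`, of the theta series of the big
module at `τ + a` (`LocalData.theta_identity`), with `r` the rank of `x`. The same holds for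
orthogonal sums of `m` copies of the situation, where each theta series and `q^r` are replaced by
their `m`-th powers. So all power sums of these `1 + q` numbers vanish, and each number is zero
(`powersum_zero`); in particular the theta series of the small lattice vanishes at `τ`
(`LocalData.theta_bot_eq_zero`).

But the vectors of the small lattice are integral and their norms lie in `𝔭`
(`LocalData.small_norm`). Choosing `𝔭` to divide none of the finitely many norms that matter makes
the zero vector dominate, so that theta series is nonzero (`exists_theta_bot_ne_zero`). Therefore the
theta series of some even unimodular lattice does not vanish at `τ₀`.
-/

open NumberField Complex

noncomputable section

/-- The inverse different `𝔡^{-1} = {a ∈ F : Tr_{F/ℚ}(ac) ∈ ℤ for all c ∈ O}`. -/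
def invDiff (F : Type*) [Field F] [NumberField F] : Set F :=
  {a : F | ∀ c : 𝓞 F, ∃ n : ℤ, Algebra.trace ℚ F (a * (c : F)) = (n : ℚ)}

set_option linter.unusedSectionVars false

/-! ### Convergence and power sums -/

section Analysis


/-- The `m`-th power of an absolutely convergent series is the series of products over
`m`-tuples. -/
theorem summable_prod_fin {X : Type*} (f : X → ℂ) (hf : Summable fun x => ‖f x‖) (m : ℕ) :
    (Summable fun v : Fin m → X => ‖∏ i, f (v i)‖) ∧
      ∑' v : Fin m → X, ∏ i, f (v i) = (∑' x, f x) ^ m := by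
  induction m with
  | zero =>
    exact ⟨Summable.of_finite, by simp⟩
  | succ m ih =>
    have key : ∀ p : X × (Fin m → X),
        ∏ i, f ((Fin.consEquiv (fun _ : Fin (m + 1) => X)) p i) = f p.1 * ∏ i, f (p.2 i) := by
      intro p
      simp [Fin.consEquiv, Fin.prod_univ_succ]
    constructor
    · rw [← (Fin.consEquiv (fun _ : Fin (m + 1) => X)).summable_iff]
      refine (hf.mul_norm ih.1).congr fun p => ?_
      simp only [Function.comp_apply]
      rw [key]
    · rw [← (Fin.consEquiv (fun _ : Fin (m + 1) => X)).tsum_eq, pow_succ', ← ih.2,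
        tsum_mul_tsum_of_summable_norm hf ih.1]
      exact tsum_congr key

theorem summable_prod_fintype {X ι : Type*} [Fintype ι] (f : X → ℂ)
    (hf : Summable fun x => ‖f x‖) : Summable fun v : ι → X => ‖∏ i, f (v i)‖ := by
  have e := Fintype.equivFin ι
  rw [← (Equiv.arrowCongr e.symm (Equiv.refl X)).summable_iff]
  refine (summable_prod_fin f hf _).1.congr fun v => ?_
  simp only [Function.comp_apply]
  congr 1
  exact (Fintype.prod_equiv e _ _ fun i => by simp).symm

theorem summable_exp_neg_sq {c : ℝ} (hc : 0 < c) :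
    Summable fun n : ℤ => Real.exp (-c * (n : ℝ) ^ 2) := by
  have h1 : Summable fun n : ℕ => Real.exp (-c * (n : ℝ) ^ 2) := by
    refine Summable.of_nonneg_of_le (fun _ => (Real.exp_pos _).le) (fun n => ?_)
      (Real.summable_exp_nat_mul_iff.2 (neg_lt_zero.2 hc))
    apply Real.exp_le_exp.2
    have : (n : ℝ) ≤ (n : ℝ) ^ 2 := by exact_mod_cast Nat.le_self_pow two_ne_zero n
    nlinarith
  refine Summable.of_nat_of_neg (by simpa using h1) (by simpa using h1)

/-- Finitely many complex numbers, all of whose power sums of positive exponent vanish, are zero. By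
linearity `∑ z j * P (z j) = 0` for every polynomial `P`; take `P` vanishing at all the values other
than `z i`. -/
theorem powersum_zero {α : Type*} (s : Finset α) (z : α → ℂ)
    (h : ∀ m : ℕ, 0 < m → ∑ i ∈ s, z i ^ m = 0) : ∀ i ∈ s, z i = 0 := by
  classical
  intro i hi
  by_contra hne
  have hpoly : ∀ P : Polynomial ℂ, ∑ j ∈ s, z j * P.eval (z j) = 0 := by
    intro P
    induction P using Polynomial.induction_on' with
    | add p q hp hq => simp [mul_add, Finset.sum_add_distrib, hp, hq]
    | monomial n a =>
      have := h (n + 1) (Nat.succ_pos n)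
      calc _ = ∑ j ∈ s, a * z j ^ (n + 1) := Finset.sum_congr rfl fun j _ => by
            rw [Polynomial.eval_monomial]; ring
        _ = 0 := by rw [← Finset.mul_sum, this, mul_zero]
  have h1 := hpoly (∏ w ∈ (s.image z).erase (z i), (Polynomial.X - Polynomial.C w))
  rw [← Finset.sum_filter_add_sum_filter_not s (fun j => z j = z i)] at h1
  rw [Finset.sum_eq_zero (s := s.filter fun j => ¬ z j = z i)] at h1
  · rw [Finset.sum_congr rfl (g := fun _ => z i * Polynomial.eval (z i)
      (∏ w ∈ (s.image z).erase (z i), (Polynomial.X - Polynomial.C w)))] at h1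
    · rw [Finset.sum_const, add_zero, nsmul_eq_mul] at h1
      have h2 : ((s.filter fun j => z j = z i).card : ℂ) ≠ 0 := by
        exact_mod_cast (Finset.card_pos.2 ⟨i, by simp [hi]⟩).ne'
      have h3 : Polynomial.eval (z i)
          (∏ w ∈ (s.image z).erase (z i), (Polynomial.X - Polynomial.C w)) ≠ 0 := by
        rw [Polynomial.eval_prod, Finset.prod_ne_zero_iff]
        intro w hw
        simpa [sub_eq_zero] using (Finset.ne_of_mem_erase hw).symm
      exact mul_ne_zero h2 (mul_ne_zero hne h3) h1
    · intro j hj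
      rw [(Finset.mem_filter.1 hj).2]
  · intro j hj
    obtain ⟨hj1, hj2⟩ := Finset.mem_filter.1 hj
    rw [Polynomial.eval_prod, Finset.prod_eq_zero (i := z j)]
    · simp
    · exact Finset.mem_erase.2 ⟨hj2, Finset.mem_image_of_mem _ hj1⟩
    · simp

variable {F : Type} [Field F] [NumberField F]

/-- The cardinality hypothesis says that every complex embedding is real, so the trace is the sum over
the real embeddings. -/
theorem trace_eq_sum_real (htr : Nat.card (F →+* ℝ) = Module.finrank ℚ F)
    [Fintype (F →+* ℝ)] (a : F) :
    ((Algebra.trace ℚ F a : ℚ) : ℝ) = ∑ σ : F →+* ℝ, σ a := by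
  have hinj : Function.Injective (fun σ : F →+* ℝ => (ofRealHom.comp σ : F →+* ℂ)) := by
    intro σ τ h
    ext x
    have := congrArg (fun g : F →+* ℂ => g x) h
    simpa using this
  have hcard : Fintype.card (F →+* ℝ) = Fintype.card (F →+* ℂ) := by
    rw [NumberField.Embeddings.card, ← htr, Nat.card_eq_fintype_card]
  have hbij := (Fintype.bijective_iff_injective_and_card _).2 ⟨hinj, hcard⟩
  have h1 := trace_eq_sum_embeddings ℂ (K := ℚ) (L := F) (x := a)
  have h2 : ∑ σ : F →ₐ[ℚ] ℂ, σ a = ∑ σ : F →+* ℂ, σ a :=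
    (Fintype.sum_equiv (RingHom.equivRatAlgHom F ℂ) _ _ fun _ => rfl).symm
  rw [h2, ← hbij.sum_comp (fun σ : F →+* ℂ => σ a)] at h1
  have : (((Algebra.trace ℚ F a : ℚ) : ℝ) : ℂ) = ((∑ σ : F →+* ℝ, σ a : ℝ) : ℂ) := by
    push_cast
    simpa using h1
  exact_mod_cast this

instance : Finite (F →+* ℝ) := by
  refine Finite.of_injective (fun σ : F →+* ℝ => (ofRealHom.comp σ : F →+* ℂ)) ?_
  intro σ τ h
  ext x
  have := congrArg (fun g : F →+* ℂ => g x) h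
  simpa using this

/-- Gaussian sums over the ring of integers converge: the integral coordinates are bounded by the
conjugates, through the dual basis for the trace form. -/
theorem summable_gauss_int (htr : Nat.card (F →+* ℝ) = Module.finrank ℚ F) [Fintype (F →+* ℝ)]
    (c : (F →+* ℝ) → ℝ) (hc : ∀ σ, 0 < c σ) :
    Summable fun a : 𝓞 F => Real.exp (-∑ σ : F →+* ℝ, c σ * (σ (a : F)) ^ 2) := by
  classical
  let B := NumberField.RingOfIntegers.basis F
  let B' := NumberField.integralBasis F
  let b' := (Algebra.traceForm ℚ F).dualBasis (traceForm_nondegenerate ℚ F) B'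
  -- coordinates through the trace form
  have hcoord : ∀ (a : 𝓞 F) i, ((B.repr a i : ℤ) : ℝ) = ∑ σ : F →+* ℝ, σ (b' i) * σ (a : F) := by
    intro a i
    have h1 : Algebra.traceForm ℚ F (a : F) (b' i) = B'.repr (a : F) i := by
      conv_lhs => rw [← B'.sum_repr (a : F)]
      rw [LinearMap.BilinForm.sum_left]
      simp only [LinearMap.BilinForm.smul_left]
      rw [Finset.sum_eq_single i]
      · rw [LinearMap.BilinForm.apply_dualBasis_right (traceForm_nondegenerate ℚ F)
          (Algebra.traceForm_isSymm ℚ)]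
        simp
      · intro j _ hj
        rw [LinearMap.BilinForm.apply_dualBasis_right (traceForm_nondegenerate ℚ F)
          (Algebra.traceForm_isSymm ℚ)]
        simp [hj]
      · simp
    have h2 : B'.repr (a : F) i = (B.repr a i : ℤ) := by
      exact NumberField.integralBasis_repr_apply F a i
    rw [h2, Algebra.traceForm_apply] at h1
    have h3 := trace_eq_sum_real htr ((a : F) * b' i)
    rw [h1] at h3
    simp only [map_mul] at h3
    push_cast at h3
    rw [h3]
    exact Finset.sum_congr rfl fun _ _ => mul_comm _ _
  -- the squared coordinates are controlled by the quadratic form, by Cauchy–Schwarz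
  have hbound : ∃ d : ℝ, 0 < d ∧ ∀ a : 𝓞 F,
      d * ∑ i, ((B.repr a i : ℤ) : ℝ) ^ 2 ≤ ∑ σ : F →+* ℝ, c σ * (σ (a : F)) ^ 2 := by
    let K : ℝ := ∑ i, ∑ σ : F →+* ℝ, σ (b' i) ^ 2 / c σ
    have hK : 0 ≤ K := Finset.sum_nonneg fun i _ => Finset.sum_nonneg fun σ _ =>
      div_nonneg (sq_nonneg _) (hc σ).le
    refine ⟨1 / (K + 1), by positivity, fun a => ?_⟩
    have hS : 0 ≤ ∑ σ : F →+* ℝ, c σ * (σ (a : F)) ^ 2 :=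
      Finset.sum_nonneg fun σ _ => mul_nonneg (hc σ).le (sq_nonneg _)
    have hcs : ∀ i, ((B.repr a i : ℤ) : ℝ) ^ 2 ≤
        (∑ σ : F →+* ℝ, σ (b' i) ^ 2 / c σ) * ∑ σ : F →+* ℝ, c σ * (σ (a : F)) ^ 2 := by
      intro i
      rw [hcoord]
      apply Finset.sum_sq_le_sum_mul_sum_of_sq_le_mul
      · intro σ _; exact div_nonneg (sq_nonneg _) (hc σ).le
      · intro σ _; exact mul_nonneg (hc σ).le (sq_nonneg _)
      · intro σ _
        have := (hc σ).ne'
        apply le_of_eq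
        field_simp
    have hsum := Finset.sum_le_sum fun i (_ : i ∈ Finset.univ) => hcs i
    rw [← Finset.sum_mul] at hsum
    rw [one_div, inv_mul_le_iff₀ (by positivity)]
    refine hsum.trans ?_
    nlinarith
  obtain ⟨d, hd, hle⟩ := hbound
  have hs := summable_prod_fintype (ι := Module.Free.ChooseBasisIndex ℤ (𝓞 F))
    (fun n : ℤ => (Real.exp (-d * (n : ℝ) ^ 2) : ℂ)) (by
      refine (summable_exp_neg_sq hd).congr fun n => ?_
      simp [-Complex.ofReal_exp, abs_of_pos (Real.exp_pos _)] )
  have hs2 := (B.equivFun.toEquiv.summable_iff).2 hs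
  refine Summable.of_nonneg_of_le (fun _ => (Real.exp_pos _).le) (fun a => ?_) hs2
  simp only [Function.comp_apply, norm_prod]
  have : ∀ x : ℝ, ‖((Real.exp x : ℝ) : ℂ)‖ = Real.exp x := fun x => by
    rw [Complex.norm_real, Real.norm_of_nonneg (Real.exp_pos _).le]
  simp only [this]
  rw [← Real.exp_sum, ← Finset.mul_sum]
  apply Real.exp_le_exp.2
  have := hle a
  simp only [LinearEquiv.coe_toEquiv, Module.Basis.equivFun_apply]
  linarith

end Analysis

/-! ### Arithmetic at a prime -/

section Primes

open scoped nonZeroDivisors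

/-- The arithmetic at a prime `𝔭` of `F` used in the construction, with `k` the residue field:
* `D = 𝔡⁻¹` is the inverse different, `I = 𝔭⁻¹`, and `P = 𝔭𝔡⁻¹`;
* `res : O → k` is reduction modulo `𝔭`;
* `φ : 𝔭⁻¹ → 𝔭⁻¹/O ≅ k` and `ψ : 𝔡⁻¹ → 𝔡⁻¹/𝔭𝔡⁻¹ ≅ k` are `O`-linear surjections, extended to maps on
  `F` whose values outside `I`, respectively `D`, carry no meaning;
* `e` generates `𝔭⁻¹𝔡⁻¹` modulo `𝔡⁻¹`, so that `x w` is congruent to `φ x · ψ w` times `e` (`pair`);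
* `N` is a positive integer clearing `𝔡⁻¹`, and `t` is a positive integer lying in `𝔭`.

Only these properties of the prime are used afterwards, so `𝔭` itself is not recorded. -/
structure LocalData (F : Type) [Field F] [NumberField F] (k : Type) [Field k] where
  D : Submodule (𝓞 F) F
  I : Submodule (𝓞 F) F
  P : Submodule (𝓞 F) F
  res : 𝓞 F →+* k
  φ : F → k
  ψ : F → k
  e : F
  N : ℕ
  t : ℕ
  hN : 0 < N
  ht : 0 < t
  mem_D : ∀ a, a ∈ D ↔ a ∈ invDiff F
  int_I : ∀ c : 𝓞 F, (c : F) ∈ I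
  int_D : ∀ c : 𝓞 F, (c : F) ∈ D
  P_le : P ≤ D
  N_D : ∀ w ∈ D, ∃ c : 𝓞 F, (N : F) * w = c
  N_P : ∀ w ∈ P, ∃ c : 𝓞 F, res c = 0 ∧ (N : F) * w = c
  t_I : ∀ x ∈ I, ∃ c : 𝓞 F, (t : F) * x = c
  t_D : ∀ w ∈ D, (t : F) * w ∈ P
  res_t : res (t : 𝓞 F) = 0
  I_P : ∀ x ∈ I, ∀ w ∈ P, x * w ∈ D
  dual_D : ∀ x, (∀ w ∈ D, x * w ∈ D) → ∃ c : 𝓞 F, x = c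
  dual_P : ∀ x, (∀ w ∈ P, x * w ∈ D) → x ∈ I
  res_surj : Function.Surjective res
  φ_add : ∀ x ∈ I, ∀ y ∈ I, φ (x + y) = φ x + φ y
  φ_smul : ∀ (c : 𝓞 F), ∀ x ∈ I, φ (c * x) = res c * φ x
  φ_surj : ∀ z, ∃ x ∈ I, φ x = z
  φ_ker : ∀ x ∈ I, (φ x = 0 ↔ ∃ c : 𝓞 F, x = c)
  ψ_add : ∀ x ∈ D, ∀ y ∈ D, ψ (x + y) = ψ x + ψ y
  ψ_smul : ∀ (c : 𝓞 F), ∀ x ∈ D, ψ (c * x) = res c * ψ x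
  ψ_surj : ∀ z, ∃ x ∈ D, ψ x = z
  ψ_ker : ∀ x ∈ D, (ψ x = 0 ↔ x ∈ P)
  pair : ∀ x ∈ I, ∀ w ∈ D, ∃ c : 𝓞 F, res c = φ x * ψ w ∧ x * w - c * e ∈ D
  pair_e : ∀ c : 𝓞 F, (c : F) * e ∈ D ↔ res c = 0

/-- A nonzero fractional ideal `J` is generated modulo `𝔭J` by any `ρ ∈ J` outside `𝔭J`. The map `φ`
sends `c ρ + 𝔭J` to the class of `c`. -/
theorem exists_residue {F : Type} [Field F] [NumberField F] (p : Ideal (𝓞 F)) [p.IsMaximal]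
    (J : FractionalIdeal (𝓞 F)⁰ F) (hJ : J ≠ 0) :
    ∃ (φ : F → 𝓞 F ⧸ p) (ρ : F), (∀ x ∈ J, ∀ y ∈ J, φ (x + y) = φ x + φ y) ∧
      (∀ (c : 𝓞 F), ∀ x ∈ J, φ (c * x) = Ideal.Quotient.mk p c * φ x) ∧
      (∀ z, ∃ x ∈ J, φ x = z) ∧
      (∀ x ∈ J, (φ x = 0 ↔ x ∈ (p : FractionalIdeal (𝓞 F)⁰ F) * J)) ∧
      ρ ∈ J ∧ ρ ∉ (p : FractionalIdeal (𝓞 F)⁰ F) * J ∧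
      (∀ x ∈ J, ∀ c : 𝓞 F, φ x = Ideal.Quotient.mk p c →
        x - c * ρ ∈ (p : FractionalIdeal (𝓞 F)⁰ F) * J) := by
  classical
  set pf : FractionalIdeal (𝓞 F)⁰ F := (p : FractionalIdeal (𝓞 F)⁰ F) with hpf
  have hp1 : pf ≤ 1 := FractionalIdeal.coeIdeal_le_one
  have hpJ : pf * J ≤ J := by
    calc pf * J ≤ 1 * J := by gcongr
      _ = J := one_mul J
  have hne : pf * J ≠ J := by
    intro h
    have h1 : pf = 1 := by
      have := congrArg (· * J⁻¹) h
      simpa [mul_assoc, mul_inv_cancel₀ hJ] using this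
    have : p = ⊤ := by
      rw [hpf, ← FractionalIdeal.coeIdeal_top] at h1
      exact FractionalIdeal.coeIdeal_injective h1
    exact Ideal.IsMaximal.ne_top ‹_› this
  obtain ⟨ρ, hρJ, hρ⟩ : ∃ ρ ∈ J, ρ ∉ pf * J := by
    by_contra! h
    exact hne (le_antisymm hpJ h)
  have hsmul : ∀ (M : FractionalIdeal (𝓞 F)⁰ F) (c : 𝓞 F) (x : F), x ∈ M → (c : F) * x ∈ M := by
    intro M c x hx
    have := (M : Submodule (𝓞 F) F).smul_mem c hx
    simpa [Algebra.smul_def] using this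
  have hadd : ∀ (M : FractionalIdeal (𝓞 F)⁰ F) (x y : F), x ∈ M → y ∈ M → x + y ∈ M :=
    fun M x y hx hy => (M : Submodule (𝓞 F) F).add_mem hx hy
  have hsub : ∀ (M : FractionalIdeal (𝓞 F)⁰ F) (x y : F), x ∈ M → y ∈ M → x - y ∈ M :=
    fun M x y hx hy => (M : Submodule (𝓞 F) F).sub_mem hx hy
  -- `J = 𝓞 ρ + 𝔭 J`
  have hgen : ∀ x ∈ J, ∃ c : 𝓞 F, x - c * ρ ∈ pf * J := by
    set X : FractionalIdeal (𝓞 F)⁰ F := FractionalIdeal.spanSingleton _ ρ ⊔ pf * J with hX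
    have hXJ : X ≤ J := sup_le (FractionalIdeal.spanSingleton_le_iff_mem.2 hρJ) hpJ
    have h1 : X * J⁻¹ ≤ 1 := by
      calc X * J⁻¹ ≤ J * J⁻¹ := by gcongr
        _ = 1 := mul_inv_cancel₀ hJ
    obtain ⟨q, hq⟩ := FractionalIdeal.le_one_iff_exists_coeIdeal.1 h1
    have h2 : pf ≤ X * J⁻¹ := by
      calc pf = pf * J * J⁻¹ := by rw [mul_assoc, mul_inv_cancel₀ hJ, mul_one]
        _ ≤ X * J⁻¹ := by gcongr; exact le_sup_right
    have hpq : p ≤ q := by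
      rw [← hq] at h2
      exact FractionalIdeal.coeIdeal_le_coeIdeal F |>.1 h2
    have hXq : X = (q : FractionalIdeal (𝓞 F)⁰ F) * J := by
      rw [hq, mul_assoc, inv_mul_cancel₀ hJ, mul_one]
    have hqt : q = ⊤ := by
      rcases (‹p.IsMaximal›.eq_of_le · hpq) with h
      by_contra hq'
      have : p = q := h hq'
      apply hρ
      rw [hpf, this, ← hXq]
      exact (le_sup_left : _ ≤ X) (FractionalIdeal.mem_spanSingleton_self _ ρ)
    have hXJ' : X = J := by
      rw [hXq, hqt, FractionalIdeal.coeIdeal_top, one_mul]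
    intro x hx
    rw [← hXJ', hX] at hx
    have hx' : x ∈ (FractionalIdeal.spanSingleton (𝓞 F)⁰ ρ : Submodule (𝓞 F) F) ⊔
        ((pf * J : FractionalIdeal (𝓞 F)⁰ F) : Submodule (𝓞 F) F) := by
      rw [← FractionalIdeal.coe_sup]; exact hx
    obtain ⟨y, hy, z, hz, rfl⟩ := Submodule.mem_sup.1 hx'
    obtain ⟨c, rfl⟩ := FractionalIdeal.mem_spanSingleton _ |>.1 hy
    refine ⟨c, ?_⟩
    have : c • ρ + z - (c : F) * ρ = z := by rw [Algebra.smul_def]; ring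
    rw [this]
    exact hz
  have huniq : ∀ c : 𝓞 F, (c : F) * ρ ∈ pf * J → c ∈ p := by
    intro c hc
    by_contra hcp
    obtain ⟨s, hs⟩ := Ideal.IsMaximal.exists_inv ‹p.IsMaximal› hcp
    obtain ⟨r, hr, hrs⟩ := hs
    apply hρ
    have h1 : ρ = (s : F) * ((c : F) * ρ) + (r : F) * ρ := by
      have : ((s * c + r : 𝓞 F) : F) = 1 := by rw [hrs]; simp
      push_cast at this
      linear_combination -ρ * this
    rw [h1]
    refine hadd _ _ _ (hsmul _ _ _ hc) ?_
    exact FractionalIdeal.mul_mem_mul (FractionalIdeal.mem_coeIdeal_of_mem _ hr) hρJ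
  have hmem : ∀ c ∈ p, (c : F) * ρ ∈ pf * J := fun c hc =>
    FractionalIdeal.mul_mem_mul (FractionalIdeal.mem_coeIdeal_of_mem _ hc) hρJ
  let φ : F → 𝓞 F ⧸ p := fun x =>
    if h : ∃ c : 𝓞 F, x - c * ρ ∈ pf * J then Ideal.Quotient.mk p h.choose else 0
  have hφ : ∀ (x : F) (c : 𝓞 F), x - c * ρ ∈ pf * J → φ x = Ideal.Quotient.mk p c := by
    intro x c hc
    have h : ∃ c : 𝓞 F, x - c * ρ ∈ pf * J := ⟨c, hc⟩
    simp only [φ, dif_pos h]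
    rw [Ideal.Quotient.eq]
    apply huniq
    have := hsub _ _ _ hc h.choose_spec
    convert this using 1
    push_cast
    ring
  refine ⟨φ, ρ, ?_, ?_, ?_, ?_, hρJ, hρ, ?_⟩
  · intro x hx y hy
    obtain ⟨c, hc⟩ := hgen x hx
    obtain ⟨d, hd⟩ := hgen y hy
    rw [hφ x c hc, hφ y d hd, ← map_add]
    apply hφ
    convert hadd _ _ _ hc hd using 1
    push_cast
    ring
  · intro c x hx
    obtain ⟨d, hd⟩ := hgen x hx
    rw [hφ x d hd, ← map_mul]
    apply hφ
    convert hsmul _ c _ hd using 1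
    push_cast
    ring
  · intro z
    obtain ⟨c, rfl⟩ := Ideal.Quotient.mk_surjective z
    refine ⟨c * ρ, hsmul _ _ _ hρJ, hφ _ _ ?_⟩
    rw [sub_self]
    exact (pf * J : FractionalIdeal (𝓞 F)⁰ F).1.zero_mem
  · intro x hx
    obtain ⟨c, hc⟩ := hgen x hx
    rw [hφ x c hc, Ideal.Quotient.eq_zero_iff_mem]
    constructor
    · intro h
      have := hadd _ _ _ hc (hmem c h)
      simpa using this
    · intro h
      apply huniq
      have := hsub _ _ _ h hc
      simpa using this
  · intro x hx c hc
    obtain ⟨d, hd⟩ := hgen x hx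
    rw [hφ x d hd, Ideal.Quotient.eq] at hc
    have := hadd _ _ _ hd (hmem _ hc)
    convert this using 1
    push_cast
    ring

/-- `invDiff` is the trace dual of the unit fractional ideal. -/
theorem mem_invDiff_iff {F : Type} [Field F] [NumberField F] (a : F) :
    a ∈ FractionalIdeal.dual ℤ ℚ (1 : FractionalIdeal (𝓞 F)⁰ F) ↔ a ∈ invDiff F := by
  rw [FractionalIdeal.mem_dual (one_ne_zero : (1 : FractionalIdeal (𝓞 F)⁰ F) ≠ 0)]
  simp only [invDiff, Set.mem_ofPred_eq, FractionalIdeal.mem_one_iff]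
  constructor
  · intro h c
    obtain ⟨n, hn⟩ := h c ⟨c, rfl⟩
    exact ⟨n, by rw [← Algebra.traceForm_apply, ← hn]; simp⟩
  · rintro h _ ⟨c, rfl⟩
    obtain ⟨n, hn⟩ := h c
    exact ⟨n, by rw [Algebra.traceForm_apply, hn]; simp⟩

/-- A positive integer clears the denominators of the inverse different. -/
theorem exists_clear (F : Type) [Field F] [NumberField F] :
    ∃ N : ℕ, 0 < N ∧ ∀ w ∈ invDiff F, ∃ c : 𝓞 F, (N : F) * w = c := by
  obtain ⟨a, ha, h⟩ := (FractionalIdeal.dual ℤ ℚ (1 : FractionalIdeal (𝓞 F)⁰ F)).isFractional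
  have ha0 : a ≠ 0 := nonZeroDivisors.ne_zero ha
  have hspan : Ideal.span {a} ≠ ⊥ := by simpa using ha0
  refine ⟨Ideal.absNorm (Ideal.span {a}), Nat.pos_of_ne_zero
    (by simpa using ha0), fun w hw => ?_⟩
  obtain ⟨c, hc⟩ := h w ((mem_invDiff_iff w).2 hw)
  obtain ⟨d, hd⟩ := Ideal.mem_span_singleton'.1 (Ideal.absNorm_mem (Ideal.span {a}))
  refine ⟨d * c, ?_⟩
  have h2 := congrArg (fun z : 𝓞 F => (z : F)) hd
  simp only [map_mul, map_natCast] at h2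
  have h3 : ((d * c : 𝓞 F) : F) = (d : F) * (c : F) := map_mul _ _ _
  have h4 : (c : F) = (a : F) * w := hc.trans (Algebra.smul_def _ _)
  rw [← h2, h3, h4, mul_assoc]

theorem exists_maximal_not_mem {F : Type} [Field F] [NumberField F] (β : 𝓞 F) (hβ : β ≠ 0) :
    ∃ p : Ideal (𝓞 F), p.IsMaximal ∧ p ≠ ⊥ ∧ β ∉ p := by
  set n := Ideal.absNorm (Ideal.span {β}) with hn
  have hn0 : n ≠ 0 := by simpa [hn] using hβ
  obtain ⟨q, hq, hprime⟩ := Nat.exists_infinite_primes (n + 1)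
  have hnu : ¬ IsUnit (q : 𝓞 F) := by
    intro h
    have := h.map (Algebra.norm ℤ)
    have h2 : Algebra.norm ℤ (q : 𝓞 F) = (q : ℤ) ^ Module.finrank ℤ (𝓞 F) := by
      have := Algebra.norm_algebraMap (S := 𝓞 F) (q : ℤ)
      simpa using this
    rw [h2] at this
    rw [isUnit_pow_iff] at this
    · rw [Int.isUnit_iff] at this
      have := hprime.two_le
      omega
    · exact Module.finrank_pos.ne'
  obtain ⟨p, hp, hqp⟩ := exists_max_ideal_of_mem_nonunits hnu
  refine ⟨p, hp, ?_, ?_⟩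
  · rintro rfl
    rw [Ideal.mem_bot] at hqp
    exact hprime.ne_zero (by exact_mod_cast hqp)
  · intro hβp
    have hnp : (n : 𝓞 F) ∈ p :=
      (Ideal.span_singleton_le_iff_mem p).2 hβp (Ideal.absNorm_mem _)
    have hcop : Nat.Coprime n q :=
      (Nat.coprime_of_lt_prime hn0 (by omega) hprime).symm
    have hbz := Nat.isCoprime_iff_coprime.2 hcop
    obtain ⟨a, b, hab⟩ := hbz
    apply hp.ne_top
    rw [Ideal.eq_top_iff_one]
    have : (1 : 𝓞 F) = (a : 𝓞 F) * n + (b : 𝓞 F) * q := by exact_mod_cast hab.symm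
    rw [this]
    exact p.add_mem (p.mul_mem_left _ hnp) (p.mul_mem_left _ hqp)

/-- Local data exist with `N` prescribed, at some prime not containing a given nonzero integer `β`. -/
theorem exists_localData {F : Type} [Field F] [NumberField F] (N : ℕ) (hN : 0 < N)
    (hclear : ∀ w ∈ invDiff F, ∃ c : 𝓞 F, (N : F) * w = c) (β : 𝓞 F) (hβ : β ≠ 0) :
    ∃ (k : Type) (_ : Field k) (_ : Finite k) (d : LocalData F k), d.N = N ∧ d.res β ≠ 0 := by
  obtain ⟨p, hp, hp0, hβp⟩ := exists_maximal_not_mem β hβ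
  set Df : FractionalIdeal (𝓞 F)⁰ F := FractionalIdeal.dual ℤ ℚ (1 : FractionalIdeal (𝓞 F)⁰ F)
    with hDf
  have hD0 : Df ≠ 0 :=
    FractionalIdeal.dual_ne_zero ℤ ℚ (one_ne_zero : (1 : FractionalIdeal (𝓞 F)⁰ F) ≠ 0)
  set pf : FractionalIdeal (𝓞 F)⁰ F := (p : FractionalIdeal (𝓞 F)⁰ F) with hpf
  have hpf0 : pf ≠ 0 := FractionalIdeal.coeIdeal_ne_zero.2 hp0
  obtain ⟨φ, π, φa, φm, φs, φk, hπ, hπ', φr⟩ := exists_residue p pf⁻¹ (inv_ne_zero hpf0)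
  obtain ⟨ψ, ρ, ψa, ψm, ψs, ψk, hρ, hρ', ψr⟩ := exists_residue p Df hD0
  rw [mul_inv_cancel₀ hpf0] at φk hπ' φr
  have hmem1 : ∀ x : F, x ∈ (1 : FractionalIdeal (𝓞 F)⁰ F) ↔ ∃ c : 𝓞 F, x = c := fun x => by
    rw [FractionalIdeal.mem_one_iff]
    exact ⟨fun ⟨c, h⟩ => ⟨c, h.symm⟩, fun ⟨c, h⟩ => ⟨c, h.symm⟩⟩
  have h1D : 1 ≤ Df := FractionalIdeal.one_le_dual_one ℤ ℚ
  have h1I : 1 ≤ pf⁻¹ := by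
    calc 1 = pf * pf⁻¹ := (mul_inv_cancel₀ hpf0).symm
      _ ≤ 1 * pf⁻¹ := by gcongr; exact FractionalIdeal.coeIdeal_le_one
      _ = pf⁻¹ := one_mul _
  have hPD : pf * Df ≤ Df := by
    calc pf * Df ≤ 1 * Df := by gcongr; exact FractionalIdeal.coeIdeal_le_one
      _ = Df := one_mul _
  have hsmul : ∀ (M : FractionalIdeal (𝓞 F)⁰ F) (c : 𝓞 F) (x : F), x ∈ M → (c : F) * x ∈ M := by
    intro M c x hx
    have := (M : Submodule (𝓞 F) F).smul_mem c hx
    simpa [Algebra.smul_def] using this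
  have hadd : ∀ (M : FractionalIdeal (𝓞 F)⁰ F) (x y : F), x ∈ M → y ∈ M → x + y ∈ M :=
    fun M x y hx hy => (M : Submodule (𝓞 F) F).add_mem hx hy
  have hmul : ∀ {M M' : FractionalIdeal (𝓞 F)⁰ F} {x y : F}, x ∈ M → y ∈ M' → x * y ∈ M * M' :=
    fun hx hy => FractionalIdeal.mul_mem_mul hx hy
  have hint : ∀ c : 𝓞 F, (c : F) ∈ (1 : FractionalIdeal (𝓞 F)⁰ F) := fun c => (hmem1 _).2 ⟨c, rfl⟩
  have hpmem : ∀ c ∈ p, (c : F) ∈ pf := fun c hc => FractionalIdeal.mem_coeIdeal_of_mem _ hc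
  have htp : (Ideal.absNorm p : 𝓞 F) ∈ p := Ideal.absNorm_mem p
  have htp' : ((Ideal.absNorm p : ℕ) : F) ∈ pf := by
    have := hpmem _ htp
    simpa using this
  have hIP : ∀ x ∈ pf⁻¹, ∀ w ∈ pf * Df, x * w ∈ Df := by
    intro x hx w hw
    have := hmul hx hw
    rwa [← mul_assoc, inv_mul_cancel₀ hpf0, one_mul] at this
  have hspan : ∀ (M M' : FractionalIdeal (𝓞 F)⁰ F) (x : F), (∀ w ∈ M, x * w ∈ M') →
      FractionalIdeal.spanSingleton (𝓞 F)⁰ x * M ≤ M' := fun M M' x h =>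
    FractionalIdeal.spanSingleton_mul_le_iff.2 h
  have hdualD : ∀ x, (∀ w ∈ Df, x * w ∈ Df) → ∃ c : 𝓞 F, x = c := by
    intro x h
    rw [← hmem1, ← FractionalIdeal.spanSingleton_le_iff_mem]
    have := hspan _ _ _ h
    calc FractionalIdeal.spanSingleton (𝓞 F)⁰ x
        = FractionalIdeal.spanSingleton (𝓞 F)⁰ x * Df * Df⁻¹ := by
          rw [mul_assoc, mul_inv_cancel₀ hD0, mul_one]
      _ ≤ Df * Df⁻¹ := by gcongr
      _ = 1 := mul_inv_cancel₀ hD0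
  have hdualP : ∀ x, (∀ w ∈ pf * Df, x * w ∈ Df) → x ∈ pf⁻¹ := by
    intro x h
    rw [← FractionalIdeal.spanSingleton_le_iff_mem]
    have := hspan _ _ _ h
    calc FractionalIdeal.spanSingleton (𝓞 F)⁰ x
        = FractionalIdeal.spanSingleton (𝓞 F)⁰ x * (pf * Df) * (pf * Df)⁻¹ := by
          rw [mul_assoc, mul_inv_cancel₀ (mul_ne_zero hpf0 hD0), mul_one]
      _ ≤ Df * (pf * Df)⁻¹ := by gcongr
      _ = pf⁻¹ := by rw [mul_inv, mul_comm pf⁻¹, ← mul_assoc, mul_inv_cancel₀ hD0, one_mul]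
  have hpe : ∀ c ∈ p, (c : F) * (π * ρ) ∈ Df := by
    intro c hc
    have := hIP π hπ (c * ρ) (hmul (hpmem c hc) hρ)
    convert this using 1
    ring
  -- `π ρ` is not in the inverse different: otherwise `π` would stabilise it
  have hπρ : π * ρ ∉ Df := by
    intro h
    apply hπ'
    rw [hmem1]
    apply hdualD
    intro w hw
    obtain ⟨c, hc⟩ := Ideal.Quotient.mk_surjective (ψ w)
    have h1 := hIP π hπ _ (ψr w hw c hc.symm)
    have h2 := hadd _ _ _ h1 (hsmul _ c _ h)
    convert h2 using 1
    ring
  let : Field (𝓞 F ⧸ p) := Ideal.Quotient.field p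
  refine ⟨𝓞 F ⧸ p, inferInstance, ?_,
    { D := Df
      I := (pf⁻¹ : FractionalIdeal (𝓞 F)⁰ F)
      P := (pf * Df : FractionalIdeal (𝓞 F)⁰ F)
      res := Ideal.Quotient.mk p
      φ := φ
      ψ := ψ
      e := π * ρ
      N := N
      t := Ideal.absNorm p
      hN := hN
      ht := Nat.pos_of_ne_zero fun h => hp0 (Ideal.absNorm_eq_zero_iff.1 h)
      mem_D := mem_invDiff_iff
      int_I := fun c => h1I (hint c)
      int_D := fun c => h1D (hint c)
      P_le := hPD
      N_D := fun w hw => hclear w ((mem_invDiff_iff w).1 hw)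
      N_P := ?_
      t_I := ?_
      t_D := fun w hw => hmul htp' hw
      res_t := Ideal.Quotient.eq_zero_iff_mem.2 htp
      I_P := hIP
      dual_D := hdualD
      dual_P := hdualP
      res_surj := Ideal.Quotient.mk_surjective
      φ_add := φa
      φ_smul := φm
      φ_surj := φs
      φ_ker := fun x hx => (φk x hx).trans (hmem1 x)
      ψ_add := ψa
      ψ_smul := ψm
      ψ_surj := ψs
      ψ_ker := ψk
      pair := ?_
      pair_e := ?_ }, rfl, ?_⟩
  · exact Ideal.finiteQuotientOfFreeOfNeBot p hp0
  · intro w hw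
    have hle : FractionalIdeal.spanSingleton (𝓞 F)⁰ (N : F) * (pf * Df) ≤ pf := by
      have h1 : FractionalIdeal.spanSingleton (𝓞 F)⁰ (N : F) * Df ≤ 1 :=
        hspan _ _ _ fun w hw => (hmem1 _).2 (hclear w ((mem_invDiff_iff w).1 hw))
      calc _ = pf * (FractionalIdeal.spanSingleton (𝓞 F)⁰ (N : F) * Df) := by
            rw [mul_left_comm]
        _ ≤ pf * 1 := by gcongr
        _ = pf := mul_one _
    have h2 : (N : F) * w ∈ pf :=
      hle (hmul (FractionalIdeal.mem_spanSingleton_self _ _) hw)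
    obtain ⟨c, hc, hcw⟩ := (FractionalIdeal.mem_coeIdeal _).1 h2
    exact ⟨c, Ideal.Quotient.eq_zero_iff_mem.2 hc, hcw.symm⟩
  · intro x hx
    have := hmul htp' hx
    rwa [mul_inv_cancel₀ hpf0, hmem1] at this
  · intro x hx w hw
    obtain ⟨a, ha⟩ := Ideal.Quotient.mk_surjective (φ x)
    obtain ⟨b, hb⟩ := Ideal.Quotient.mk_surjective (ψ w)
    refine ⟨a * b, by rw [map_mul, ha, hb], ?_⟩
    obtain ⟨r, hr⟩ := (hmem1 _).1 (φr x hx a ha.symm)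
    have h1 := hsmul Df (r * b) ρ hρ
    have h2 := hIP x hx _ (ψr w hw b hb.symm)
    have h3 := hadd _ _ _ h1 h2
    change x * w - _ ∈ Df
    convert h3 using 1
    push_cast
    linear_combination (b : F) * ρ * hr
  · intro c
    rw [Ideal.Quotient.eq_zero_iff_mem]
    refine ⟨fun h => ?_, fun h => hpe c h⟩
    by_contra hcp
    obtain ⟨s, r, hr, hrs⟩ := Ideal.IsMaximal.exists_inv hp hcp
    apply hπρ
    have h1 : π * ρ = (s : F) * ((c : F) * (π * ρ)) + (r : F) * (π * ρ) := by
      have : ((s * c + r : 𝓞 F) : F) = 1 := by rw [hrs]; simp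
      push_cast at this
      linear_combination -(π * ρ) * this
    rw [h1]
    exact hadd _ _ _ (hsmul _ _ _ h) (hpe r hr)
  · exact fun h => hβp (Ideal.Quotient.eq_zero_iff_mem.1 h)

end Primes

/-! ### Lattices from subspaces over the residue field -/

namespace LocalData

open Matrix

variable {F : Type} [Field F] [NumberField F] {k : Type} [Field k] (d : LocalData F k)
  {ι : Type} [Fintype ι] [DecidableEq ι] (A : Matrix ι ι F)

theorem mem_int {a : F} : a ∈ (1 : Submodule (𝓞 F) F) ↔ ∃ c : 𝓞 F, a = c := by
  rw [Submodule.mem_one]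
  exact ⟨fun ⟨c, h⟩ => ⟨c, h.symm⟩, fun ⟨c, h⟩ => ⟨c, h.symm⟩⟩

theorem int_mul {S : Submodule (𝓞 F) F} {a z : F} (ha : a ∈ (1 : Submodule (𝓞 F) F))
    (hz : z ∈ S) : a * z ∈ S := by
  obtain ⟨c, rfl⟩ := mem_int.1 ha
  have := S.smul_mem c hz
  simpa [Algebra.smul_def] using this

theorem nat_int (n : ℕ) : (n : F) ∈ (1 : Submodule (𝓞 F) F) :=
  mem_int.2 ⟨n, by simp⟩

theorem int_mul_mem {a b : F} (ha : a ∈ (1 : Submodule (𝓞 F) F))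
    (hb : b ∈ (1 : Submodule (𝓞 F) F)) : a * b ∈ (1 : Submodule (𝓞 F) F) := int_mul ha hb

theorem two_int : (2 : F) ∈ (1 : Submodule (𝓞 F) F) := by
  simpa using nat_int (F := F) 2

/-- `A` is an integral similitude of factor `4N²t² - 1`. The factor is `-1` modulo `4N²`, which makes
`4N` divide the form on the vectors `(2N w + A x, x)`, and is prime to `𝔭`, which makes `Aᵀ`
invertible modulo `𝔭`. -/
structure Simil : Prop where
  int : ∀ i j, A i j ∈ (1 : Submodule (𝓞 F) F)
  mul_t : A * Aᵀ = (4 * (d.N : F) ^ 2 * (d.t : F) ^ 2 - 1) • (1 : Matrix ι ι F)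
  t_mul : Aᵀ * A = (4 * (d.N : F) ^ 2 * (d.t : F) ^ 2 - 1) • (1 : Matrix ι ι F)

/-- The vector `w` in the coordinates `v = (2N w + A x, x)` on `(F^ι)²`. -/
def wCoord (v : (ι → F) × (ι → F)) : ι → F := (2 * (d.N : F))⁻¹ • (v.1 - A *ᵥ v.2)

/-- The vector `b = Aᵀ w`, which is paired with `x` in the quadratic form. -/
def bCoord (v : (ι → F) × (ι → F)) : ι → F := Aᵀ *ᵥ d.wCoord A v

theorem NF : (d.N : F) ≠ 0 := Nat.cast_ne_zero.2 d.hN.ne'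
theorem tF : (d.t : F) ≠ 0 := Nat.cast_ne_zero.2 d.ht.ne'

theorem fst_eq (v : (ι → F) × (ι → F)) :
    v.1 = (2 * (d.N : F)) • d.wCoord A v + A *ᵥ v.2 := by
  have := d.NF
  rw [wCoord, smul_smul, mul_inv_cancel₀ (by simpa using this), one_smul, sub_add_cancel]

theorem wCoord_mk (w x : ι → F) :
    d.wCoord A ((2 * (d.N : F)) • w + A *ᵥ x, x) = w := by
  have := d.NF
  simp only [wCoord, add_sub_cancel_right]
  rw [smul_smul, inv_mul_cancel₀ (by simpa using this), one_smul]

theorem wCoord_add (v v' : (ι → F) × (ι → F)) :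
    d.wCoord A (v + v') = d.wCoord A v + d.wCoord A v' := by
  simp only [wCoord, Prod.fst_add, Prod.snd_add, mulVec_add, ← smul_add]
  congr 1
  abel

theorem wCoord_smul (c : F) (v : (ι → F) × (ι → F)) :
    d.wCoord A (c • v) = c • d.wCoord A v := by
  simp only [wCoord, Prod.smul_fst, Prod.smul_snd, mulVec_smul, ← smul_sub]
  rw [smul_comm]

theorem bCoord_add (v v' : (ι → F) × (ι → F)) :
    d.bCoord A (v + v') = d.bCoord A v + d.bCoord A v' := by
  simp only [bCoord, wCoord_add, mulVec_add]

theorem bCoord_smul (c : F) (v : (ι → F) × (ι → F)) :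
    d.bCoord A (c • v) = c • d.bCoord A v := by
  simp only [bCoord, wCoord_smul, mulVec_smul]

variable (F ι) in
/-- The form `(v₁·v'₁ + v₂·v'₂) / 4N` on `(F^ι)²`. The polar form of `qf` is twice this. -/
def bil (N : ℕ) : LinearMap.BilinForm F ((ι → F) × (ι → F)) :=
  LinearMap.mk₂ F (fun v v' => (4 * (N : F))⁻¹ * (v.1 ⬝ᵥ v'.1 + v.2 ⬝ᵥ v'.2))
    (by intros; simp only [Prod.fst_add, Prod.snd_add, add_dotProduct]; ring)
    (by intros; simp only [Prod.smul_fst, Prod.smul_snd, smul_dotProduct, smul_eq_mul]; ring)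
    (by intros; simp only [Prod.fst_add, Prod.snd_add, dotProduct_add]; ring)
    (by intros; simp only [Prod.smul_fst, Prod.smul_snd, dotProduct_smul, smul_eq_mul]; ring)

variable (F ι) in
/-- The quadratic form `(v₁·v₁ + v₂·v₂) / 4N` on `(F^ι)²`. -/
def qf (N : ℕ) : QuadraticForm F ((ι → F) × (ι → F)) := (bil F ι N).toQuadraticMap

theorem qf_apply (N : ℕ) (v : (ι → F) × (ι → F)) :
    qf F ι N v = (4 * (N : F))⁻¹ * (v.1 ⬝ᵥ v.1 + v.2 ⬝ᵥ v.2) := rfl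

theorem polar_apply (N : ℕ) (v v' : (ι → F) × (ι → F)) :
    QuadraticMap.polar (qf F ι N) v v' = 2 * ((4 * (N : F))⁻¹ * (v.1 ⬝ᵥ v'.1 + v.2 ⬝ᵥ v'.2)) := by
  simp only [QuadraticMap.polar, qf_apply, Prod.fst_add, Prod.snd_add, add_dotProduct,
    dotProduct_add]
  rw [dotProduct_comm v'.1 v.1, dotProduct_comm v'.2 v.2]
  ring

variable {A}

theorem dot_adj (x w : ι → F) : (A *ᵥ x) ⬝ᵥ w = x ⬝ᵥ (Aᵀ *ᵥ w) := by
  rw [mulVec_transpose, dotProduct_comm x, ← dotProduct_mulVec, dotProduct_comm]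

/-- The standard scalar product in the coordinates `(w, x)`: the similitude property turns the terms
in `x` alone into `4N²t² x·x'`. -/
theorem fst_dot (hA : d.Simil A) (v v' : (ι → F) × (ι → F)) :
    v.1 ⬝ᵥ v'.1 + v.2 ⬝ᵥ v'.2 = 4 * (d.N : F) ^ 2 * (d.wCoord A v ⬝ᵥ d.wCoord A v')
      + 2 * d.N * (v.2 ⬝ᵥ d.bCoord A v' + v'.2 ⬝ᵥ d.bCoord A v)
      + 4 * (d.N : F) ^ 2 * (d.t : F) ^ 2 * (v.2 ⬝ᵥ v'.2) := by
  have h1 : (A *ᵥ v.2) ⬝ᵥ (A *ᵥ v'.2) =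
      (4 * (d.N : F) ^ 2 * (d.t : F) ^ 2 - 1) * (v.2 ⬝ᵥ v'.2) := by
    rw [dot_adj, mulVec_mulVec, hA.t_mul, smul_mulVec, one_mulVec, dotProduct_smul, smul_eq_mul]
  conv_lhs => rw [d.fst_eq A v, d.fst_eq A v']
  simp only [add_dotProduct, dotProduct_add, smul_dotProduct, dotProduct_smul, smul_eq_mul, h1]
  rw [dotProduct_comm (d.wCoord A v) (A *ᵥ v'.2), dot_adj, dot_adj]
  simp only [bCoord]
  ring

/-- In the coordinates `(w, x)` the form is `N w·w + x·b + N t² x·x`. Only the middle term matters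
modulo the inverse different on the lattices considered below. -/
theorem qf_eq (hA : d.Simil A) (v : (ι → F) × (ι → F)) :
    qf F ι d.N v = d.N * (d.wCoord A v ⬝ᵥ d.wCoord A v) + v.2 ⬝ᵥ d.bCoord A v
      + d.N * (d.t : F) ^ 2 * (v.2 ⬝ᵥ v.2) := by
  have := d.NF
  rw [qf_apply, d.fst_dot hA]
  field_simp
  ring

theorem polar_eq (hA : d.Simil A) (v v' : (ι → F) × (ι → F)) :
    QuadraticMap.polar (qf F ι d.N) v v' = 2 * d.N * (d.wCoord A v ⬝ᵥ d.wCoord A v')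
      + (v.2 ⬝ᵥ d.bCoord A v' + v'.2 ⬝ᵥ d.bCoord A v)
      + 2 * d.N * (d.t : F) ^ 2 * (v.2 ⬝ᵥ v'.2) := by
  have := d.NF
  rw [polar_apply, d.fst_dot hA]
  field_simp
  ring

variable (A)

/-- The big module: `x` has coordinates in `𝔭⁻¹` and `w` has coordinates in `𝔡⁻¹`. -/
def big : Submodule (𝓞 F) ((ι → F) × (ι → F)) where
  carrier := {v | (∀ i, v.2 i ∈ d.I) ∧ ∀ i, d.wCoord A v i ∈ d.D}
  zero_mem' := by
    refine ⟨fun i => d.I.zero_mem, fun i => ?_⟩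
    simp [wCoord]
  add_mem' := by
    rintro v v' ⟨h1, h2⟩ ⟨h1', h2'⟩
    refine ⟨fun i => d.I.add_mem (h1 i) (h1' i), fun i => ?_⟩
    rw [wCoord_add]
    exact d.D.add_mem (h2 i) (h2' i)
  smul_mem' := by
    rintro c v ⟨h1, h2⟩
    refine ⟨fun i => d.I.smul_mem c (h1 i), fun i => ?_⟩
    rw [← algebraMap_smul F c v, wCoord_smul]
    have := d.D.smul_mem c (h2 i)
    rwa [Algebra.smul_def] at this

/-- The class of `x` in `(𝔭⁻¹/O)^ι ≅ k^ι`. -/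
def Phi (v : (ι → F) × (ι → F)) : ι → k := fun i => d.φ (v.2 i)

/-- The class of `b = Aᵀ w` in `(𝔡⁻¹/𝔭𝔡⁻¹)^ι ≅ k^ι`. -/
def Psi (v : (ι → F) × (ι → F)) : ι → k := fun i => d.ψ (d.bCoord A v i)

variable {A}

theorem mulVec_mem {S : Submodule (𝓞 F) F} {B : Matrix ι ι F}
    (hB : ∀ i j, B i j ∈ (1 : Submodule (𝓞 F) F)) {x : ι → F} (hx : ∀ i, x i ∈ S) (i : ι) :
    (B *ᵥ x) i ∈ S := by
  rw [mulVec, dotProduct]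
  exact S.sum_mem fun j _ => int_mul (hB i j) (hx j)

theorem bCoord_mem (hA : d.Simil A) {S : Submodule (𝓞 F) F} {v : (ι → F) × (ι → F)}
    (h : ∀ i, d.wCoord A v i ∈ S) (i : ι) : d.bCoord A v i ∈ S :=
  mulVec_mem (B := Aᵀ) (fun i j => hA.int j i) h i

theorem A_bCoord (hA : d.Simil A) (v : (ι → F) × (ι → F)) :
    A *ᵥ d.bCoord A v = (4 * (d.N : F) ^ 2 * (d.t : F) ^ 2 - 1) • d.wCoord A v := by
  rw [bCoord, mulVec_mulVec, hA.mul_t, smul_mulVec, one_mulVec]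

theorem four_int : (4 : F) ∈ (1 : Submodule (𝓞 F) F) := by
  simpa using nat_int (F := F) 4

/-- Since `A` is invertible modulo `𝔭`, the vector `w` lies in `𝔭𝔡⁻¹` as soon as `b = Aᵀ w` does. -/
theorem wCoord_mem_P (hA : d.Simil A) {v : (ι → F) × (ι → F)} (hv : v ∈ d.big A)
    (h : ∀ i, d.bCoord A v i ∈ d.P) (i : ι) : d.wCoord A v i ∈ d.P := by
  have h1 := mulVec_mem hA.int h i
  rw [d.A_bCoord hA] at h1
  have h2 := d.t_D _ (hv.2 i)
  have h3 : (4 * (d.N : F) ^ 2 * d.t) * (d.t * d.wCoord A v i) ∈ d.P :=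
    int_mul (int_mul_mem (int_mul_mem four_int (by rw [pow_two]; exact int_mul_mem (nat_int _) (nat_int _))) (nat_int _)) h2
  have h4 := d.P.sub_mem h3 h1
  simp only [Pi.smul_apply, smul_eq_mul] at h4
  convert h4 using 1
  ring

/-- Pairing of vectors modulo the inverse different. -/
theorem dot_pair {x b : ι → F} (hx : ∀ i, x i ∈ d.I) (hb : ∀ i, b i ∈ d.D) :
    ∃ c : 𝓞 F, d.res c = (fun i => d.φ (x i)) ⬝ᵥ (fun i => d.ψ (b i)) ∧ x ⬝ᵥ b - c * d.e ∈ d.D := by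
  choose c hc hc' using fun i => d.pair (x i) (hx i) (b i) (hb i)
  refine ⟨∑ i, c i, by simp [dotProduct, hc], ?_⟩
  have := d.D.sum_mem fun i (_ : i ∈ Finset.univ) => hc' i
  rw [Finset.sum_sub_distrib, ← Finset.sum_mul] at this
  simpa [dotProduct] using this

theorem wdot_mem {w w' : ι → F} (hw : ∀ i, w i ∈ d.D) (hw' : ∀ i, w' i ∈ d.D) :
    d.N * (w ⬝ᵥ w') ∈ d.D := by
  rw [dotProduct, Finset.mul_sum]
  refine d.D.sum_mem fun i _ => ?_
  rw [← mul_assoc]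
  exact int_mul (mem_int.2 (d.N_D _ (hw i))) (hw' i)

theorem xdot_mem {x x' : ι → F} (hx : ∀ i, x i ∈ d.I) (hx' : ∀ i, x' i ∈ d.I) :
    d.N * (d.t : F) ^ 2 * (x ⬝ᵥ x') ∈ d.D := by
  have h : (d.t : F) ^ 2 * (x ⬝ᵥ x') ∈ (1 : Submodule (𝓞 F) F) := by
    rw [dotProduct, Finset.mul_sum]
    refine Submodule.sum_mem _ fun i _ => ?_
    have := int_mul_mem (mem_int.2 (d.t_I _ (hx i))) (mem_int.2 (d.t_I _ (hx' i)))
    convert this using 1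
    ring
  rw [mul_assoc]
  obtain ⟨c, hc⟩ := mem_int.1 (int_mul_mem (nat_int d.N) h)
  rw [hc]
  exact d.int_D c

/-- On the big module the quadratic form, modulo the inverse different, is the hyperbolic form
`y·η` evaluated at the classes `y = Phi v` and `η = Psi v`. -/
theorem qf_mod (hA : d.Simil A) {v : (ι → F) × (ι → F)} (hv : v ∈ d.big A) :
    ∃ c : 𝓞 F, d.res c = d.Phi v ⬝ᵥ d.Psi A v ∧ qf F ι d.N v - c * d.e ∈ d.D := by
  obtain ⟨c, hc, hc'⟩ := d.dot_pair hv.1 (d.bCoord_mem hA hv.2)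
  refine ⟨c, hc, ?_⟩
  have h := d.D.add_mem (d.D.add_mem (d.wdot_mem hv.2 hv.2) hc') (d.xdot_mem hv.1 hv.1)
  rw [d.qf_eq hA]
  convert h using 1
  ring

/-- A multiple `c e` of the generator lies in `𝔡⁻¹` exactly when `c` lies in `𝔭`. -/
theorem sub_e_mem {z : F} {c : 𝓞 F} (h : z - c * d.e ∈ d.D) : z ∈ d.D ↔ d.res c = 0 := by
  rw [← d.pair_e]
  constructor
  · intro hz
    have := d.D.sub_mem hz h
    simpa using this
  · intro hz
    have := d.D.add_mem h hz
    simpa using this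

theorem qf_mem_iff (hA : d.Simil A) {v : (ι → F) × (ι → F)} (hv : v ∈ d.big A) :
    qf F ι d.N v ∈ d.D ↔ d.Phi v ⬝ᵥ d.Psi A v = 0 := by
  obtain ⟨c, hc, hc'⟩ := d.qf_mod hA hv
  rw [d.sub_e_mem hc', hc]

theorem polar_mem_iff (hA : d.Simil A) {v v' : (ι → F) × (ι → F)} (hv : v ∈ d.big A)
    (hv' : v' ∈ d.big A) : QuadraticMap.polar (qf F ι d.N) v v' ∈ d.D ↔
      d.Phi v ⬝ᵥ d.Psi A v' + d.Phi v' ⬝ᵥ d.Psi A v = 0 := by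
  obtain ⟨c, hc, hc1⟩ := d.dot_pair hv.1 (d.bCoord_mem hA hv'.2)
  obtain ⟨c', hc', hc1'⟩ := d.dot_pair hv'.1 (d.bCoord_mem hA hv.2)
  have h := d.D.add_mem (d.D.add_mem (int_mul two_int (d.wdot_mem hv.2 hv'.2))
    (d.D.add_mem hc1 hc1')) (int_mul two_int (d.xdot_mem hv.1 hv'.1))
  have h2 : QuadraticMap.polar (qf F ι d.N) v v' - ((c + c' : 𝓞 F) : F) * d.e ∈ d.D := by
    rw [d.polar_eq hA]
    convert h using 1
    push_cast
    ring
  rw [d.sub_e_mem h2, map_add, hc, hc']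
  rfl

theorem φ_zero : d.φ 0 = 0 :=
  (d.φ_ker 0 d.I.zero_mem).2 ⟨0, by simp⟩

theorem ψ_zero : d.ψ 0 = 0 :=
  (d.ψ_ker 0 d.D.zero_mem).2 d.P.zero_mem

variable (A)

/-- The submodule of the big module cut out by a subspace `C` of `k^ι × k^ι`. The extreme cases are
`C = ⊤`, the big module, and `C = ⊥`, the small lattice. -/
def lat (hA : d.Simil A) (C : Submodule k ((ι → k) × (ι → k))) :
    Submodule (𝓞 F) ((ι → F) × (ι → F)) where
  carrier := {v | v ∈ d.big A ∧ (d.Phi v, d.Psi A v) ∈ C}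
  zero_mem' := by
    refine ⟨Submodule.zero_mem _, ?_⟩
    have : (d.Phi (0 : (ι → F) × (ι → F)), d.Psi A (0 : (ι → F) × (ι → F))) = 0 := by
      ext i <;> simp [Phi, Psi, bCoord, wCoord, φ_zero, ψ_zero]
    rw [this]
    exact C.zero_mem
  add_mem' := by
    rintro v v' ⟨h1, h2⟩ ⟨h1', h2'⟩
    refine ⟨Submodule.add_mem _ h1 h1', ?_⟩
    convert C.add_mem h2 h2' using 1
    ext i
    · exact d.φ_add _ (h1.1 i) _ (h1'.1 i)
    · simp only [Psi, bCoord_add]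
      exact d.ψ_add _ (d.bCoord_mem hA h1.2 i) _ (d.bCoord_mem hA h1'.2 i)
  smul_mem' := by
    rintro c v ⟨h1, h2⟩
    refine ⟨Submodule.smul_mem _ c h1, ?_⟩
    convert C.smul_mem (d.res c) h2 using 1
    rw [← algebraMap_smul F c v]
    ext i
    · exact d.φ_smul c _ (h1.1 i)
    · simp only [Psi, bCoord_smul]
      exact d.ψ_smul c _ (d.bCoord_mem hA h1.2 i)

variable {A}

/-- Every pair of classes is attained. Modulo `𝔭` the inverse of `Aᵀ` is `-A`, which gives the choice
`w = -A b`. -/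
theorem surj (hA : d.Simil A) (y η : ι → k) :
    ∃ v ∈ d.big A, d.Phi v = y ∧ d.Psi A v = η := by
  choose x hx hx' using fun i => d.φ_surj (y i)
  choose b hb hb' using fun i => d.ψ_surj (η i)
  have hw : ∀ i, (-(A *ᵥ b)) i ∈ d.D := fun i => d.D.neg_mem (mulVec_mem hA.int hb i)
  refine ⟨((2 * (d.N : F)) • (-(A *ᵥ b)) + A *ᵥ x, x), ⟨hx, ?_⟩, ?_, ?_⟩
  · rw [wCoord_mk]; exact hw
  · exact funext hx'
  · ext i
    have h1 : d.bCoord A ((2 * (d.N : F)) • (-(A *ᵥ b)) + A *ᵥ x, x) i =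
        b i + (-(4 * (d.N : F) ^ 2 * (d.t : F) ^ 2)) * b i := by
      rw [bCoord, wCoord_mk, mulVec_neg, mulVec_mulVec, hA.t_mul, smul_mulVec, one_mulVec]
      simp only [Pi.neg_apply, Pi.smul_apply, smul_eq_mul]
      ring
    have h2 : (-(4 * (d.N : F) ^ 2 * (d.t : F) ^ 2)) * b i ∈ d.P := by
      have := d.P.neg_mem (int_mul (int_mul_mem (int_mul_mem four_int
        (int_mul_mem (nat_int d.N) (nat_int d.N))) (nat_int d.t)) (d.t_D _ (hb i)))
      convert this using 1
      ring
    simp only [Psi, h1]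
    rw [d.ψ_add _ (hb i) _ (d.P_le h2), (d.ψ_ker _ (d.P_le h2)).2 h2, add_zero, hb']

/-- Each `lat C` contains all vectors with `x` integral and `w` in `𝔭𝔡⁻¹`. -/
theorem mem_bot_of_int (hA : d.Simil A) (C : Submodule k ((ι → k) × (ι → k))) {x : ι → F}
    (hx : ∀ i, x i ∈ (1 : Submodule (𝓞 F) F)) {w : ι → F} (hw : ∀ i, w i ∈ d.P) :
    ((2 * (d.N : F)) • w + A *ᵥ x, x) ∈ d.lat A hA C := by
  have hI : ∀ i, x i ∈ d.I := fun i => by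
    obtain ⟨c, hc⟩ := mem_int.1 (hx i)
    rw [hc]; exact d.int_I c
  have hw' : ∀ i, d.wCoord A ((2 * (d.N : F)) • w + A *ᵥ x, x) i ∈ d.P := by
    rw [wCoord_mk]; exact hw
  refine ⟨⟨hI, fun i => d.P_le (hw' i)⟩, ?_⟩
  convert C.zero_mem using 1
  ext i
  · exact (d.φ_ker _ (hI i)).2 (mem_int.1 (hx i))
  · have := d.bCoord_mem hA hw' i
    exact (d.ψ_ker _ (d.P_le this)).2 this

/-- The dual of each `lat C` lies in the big module. Testing against vectors with a single nonzero
coordinate puts `2N w + A x` in `𝔭⁻¹` and `2N t² x + Aᵀ w` in `𝔡⁻¹`. Solving this system for `x` and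
`w` involves no denominators: its determinant is `1` by the choice of the similitude factor. -/
theorem dual_mem_big (hA : d.Simil A) (C : Submodule k ((ι → k) × (ι → k)))
    {v : (ι → F) × (ι → F)}
    (h : ∀ v' ∈ d.lat A hA C, QuadraticMap.polar (qf F ι d.N) v v' ∈ d.D) : v ∈ d.big A := by
  have hN : (d.N : F) ∈ (1 : Submodule (𝓞 F) F) := nat_int _
  have ht : (d.t : F) ∈ (1 : Submodule (𝓞 F) F) := nat_int _
  have h1 : ∀ i, 2 * d.N * d.wCoord A v i + (A *ᵥ v.2) i ∈ d.I := by
    intro i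
    apply d.dual_P
    intro w hw
    have := h _ (d.mem_bot_of_int hA C (x := 0) (fun _ => Submodule.zero_mem _)
      (w := Pi.single i w) (fun j => by
        by_cases hj : j = i
        · subst hj; simpa using hw
        · simp [hj]))
    rw [d.polar_eq hA, wCoord_mk, bCoord, wCoord_mk, ← dot_adj] at this
    simp only [dotProduct_single, zero_dotProduct, dotProduct_zero, mul_zero, add_zero] at this
    convert this using 1
    ring
  have h2 : ∀ i, 2 * d.N * (d.t : F) ^ 2 * v.2 i + d.bCoord A v i ∈ d.D := by
    intro i
    have := h _ (d.mem_bot_of_int hA C (x := Pi.single i 1) (fun j => by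
        by_cases hj : j = i
        · subst hj; simpa using nat_int (F := F) 1
        · simp [hj])
      (w := 0) (fun _ => Submodule.zero_mem _))
    rw [d.polar_eq hA, wCoord_mk, bCoord, wCoord_mk] at this
    simp only [single_dotProduct, dotProduct_single, mulVec_zero, dotProduct_zero, mul_zero, zero_add, one_mul, mul_one] at this
    convert this using 1
    ring
  have hDI : ∀ w ∈ d.D, 2 * (d.N : F) * w ∈ (1 : Submodule (𝓞 F) F) := fun w hw => by
    rw [mul_assoc]
    exact int_mul_mem two_int (mem_int.2 (d.N_D w hw))
  have hintI : ∀ a ∈ (1 : Submodule (𝓞 F) F), a ∈ d.I := fun a ha => by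
    obtain ⟨c, rfl⟩ := mem_int.1 ha; exact d.int_I c
  have hintD : ∀ a ∈ (1 : Submodule (𝓞 F) F), a ∈ d.D := fun a ha => by
    obtain ⟨c, rfl⟩ := mem_int.1 ha; exact d.int_D c
  constructor
  · intro i
    have h3 := mulVec_mem (B := Aᵀ) (fun i j => hA.int j i) (x := (2 * (d.N : F)) • d.wCoord A v + A *ᵥ v.2) h1 i
    rw [mulVec_add, mulVec_smul, mulVec_mulVec, hA.t_mul, smul_mulVec, one_mulVec] at h3
    have h4 := d.I.sub_mem (hintI _ (hDI _ (h2 i))) h3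
    simp only [Pi.add_apply, Pi.smul_apply, smul_eq_mul, bCoord] at h4
    convert h4 using 1
    ring
  · intro i
    have h3 := mulVec_mem hA.int (x := (2 * d.N * (d.t : F) ^ 2) • v.2 + d.bCoord A v) h2 i
    rw [mulVec_add, mulVec_smul, d.A_bCoord hA] at h3
    have h4 : 2 * d.N * d.t * (d.t * (2 * d.N * d.wCoord A v i + (A *ᵥ v.2) i)) ∈
        (1 : Submodule (𝓞 F) F) :=
      int_mul_mem (int_mul_mem (int_mul_mem two_int hN) ht) (mem_int.2 (d.t_I _ (h1 i)))
    have h5 := d.D.sub_mem (hintD _ h4) h3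
    simp only [Pi.add_apply, Pi.smul_apply, smul_eq_mul] at h5
    convert h5 using 1
    ring

/-- A subspace of `k^ι × k^ι` that is totally singular for the quadratic form `y·η` and contains its
own orthogonal complement for the polar form, hence equals it. -/
structure SelfDual (C : Submodule k ((ι → k) × (ι → k))) : Prop where
  iso : ∀ c ∈ C, c.1 ⬝ᵥ c.2 = 0
  max : ∀ c, (∀ c' ∈ C, c.1 ⬝ᵥ c'.2 + c'.1 ⬝ᵥ c.2 = 0) → c ∈ C

/-- Self-dual subspaces give even lattices. -/
theorem lat_even (hA : d.Simil A) {C : Submodule k ((ι → k) × (ι → k))} (hC : SelfDual C)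
    {v : (ι → F) × (ι → F)} (hv : v ∈ d.lat A hA C) : qf F ι d.N v ∈ invDiff F := by
  rw [← d.mem_D, d.qf_mem_iff hA hv.1]
  exact hC.iso _ hv.2

/-- Self-dual subspaces give unimodular lattices. -/
theorem lat_dual (hA : d.Simil A) {C : Submodule k ((ι → k) × (ι → k))} (hC : SelfDual C) :
    (d.lat A hA C : Set ((ι → F) × (ι → F))) =
      {v | ∀ v' ∈ d.lat A hA C, QuadraticMap.polar (qf F ι d.N) v v' ∈ invDiff F} := by
  ext v
  simp only [Set.mem_ofPred_eq, SetLike.mem_coe, ← d.mem_D]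
  constructor
  · intro hv v' hv'
    rw [d.polar_mem_iff hA hv.1 hv'.1]
    have h1 := hC.iso _ hv.2
    have h2 := hC.iso _ hv'.2
    have h3 := hC.iso _ (C.add_mem hv.2 hv'.2)
    simp only [Prod.fst_add, Prod.snd_add, add_dotProduct, dotProduct_add] at h1 h2 h3
    linear_combination h3 - h1 - h2
  · intro h
    have hv := d.dual_mem_big hA C h
    refine ⟨hv, hC.max _ ?_⟩
    rintro ⟨y, η⟩ hc
    obtain ⟨v', hv', rfl, rfl⟩ := d.surj hA y η
    exact (d.polar_mem_iff hA hv hv').1 (h v' ⟨hv', hc⟩)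

/-- The big module is contained in `t⁻¹ (O^ι × O^ι)`. -/
theorem big_bounded (hA : d.Simil A) {v : (ι → F) × (ι → F)} (hv : v ∈ d.big A) :
    (∀ i, d.t * v.1 i ∈ (1 : Submodule (𝓞 F) F)) ∧ ∀ i, d.t * v.2 i ∈ (1 : Submodule (𝓞 F) F) := by
  have h2 : ∀ i, d.t * v.2 i ∈ (1 : Submodule (𝓞 F) F) := fun i => mem_int.2 (d.t_I _ (hv.1 i))
  refine ⟨fun i => ?_, h2⟩
  rw [d.fst_eq A v]
  have h3 := mulVec_mem hA.int (x := (d.t : F) • v.2) h2 i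
  rw [mulVec_smul] at h3
  have h4 := int_mul_mem (int_mul_mem (nat_int d.t) two_int) (mem_int.2 (d.N_D _ (hv.2 i)))
  have h5 := Submodule.add_mem _ h4 h3
  simp only [Pi.add_apply, Pi.smul_apply, smul_eq_mul] at h5 ⊢
  convert h5 using 1
  ring

theorem lat_fg (hA : d.Simil A) (C : Submodule k ((ι → k) × (ι → k))) : (d.lat A hA C).FG := by
  let g : ((ι → 𝓞 F) × (ι → 𝓞 F)) →ₗ[𝓞 F] ((ι → F) × (ι → F)) :=
    { toFun := fun a => (fun i => (d.t : F)⁻¹ * a.1 i, fun i => (d.t : F)⁻¹ * a.2 i)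
      map_add' := by
        intro a b
        ext i <;> simp [mul_add]
      map_smul' := by
        intro c a
        ext i <;> simp [Algebra.smul_def] <;> ring }
  have hle : d.lat A hA C ≤ LinearMap.range g := by
    intro v hv
    obtain ⟨h1, h2⟩ := d.big_bounded hA hv.1
    choose a ha using fun i => mem_int.1 (h1 i)
    choose b hb using fun i => mem_int.1 (h2 i)
    have := d.tF
    refine ⟨(a, b), ?_⟩
    ext i
    · change (d.t : F)⁻¹ * (a i : F) = _
      rw [← ha, inv_mul_cancel_left₀ this]
    · change (d.t : F)⁻¹ * (b i : F) = _
      rw [← hb, inv_mul_cancel_left₀ this]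
  have : IsNoetherian (𝓞 F) (LinearMap.range g) := isNoetherian_of_surjective _ g.range_rangeRestrict
  exact isNoetherian_submodule.1 this _ hle

/-- Each `lat C` contains `2Nt (O^ι × O^ι)`. -/
theorem lat_scaled (hA : d.Simil A) (C : Submodule k ((ι → k) × (ι → k))) {v : (ι → F) × (ι → F)}
    (h1 : ∀ i, v.1 i ∈ (1 : Submodule (𝓞 F) F)) (h2 : ∀ i, v.2 i ∈ (1 : Submodule (𝓞 F) F)) :
    (2 * (d.N : F) * d.t) • v ∈ d.lat A hA C := by
  have hN : (d.N : F) ∈ (1 : Submodule (𝓞 F) F) := nat_int _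
  have ht : (d.t : F) ∈ (1 : Submodule (𝓞 F) F) := nat_int _
  have key : (2 * (d.N : F) * d.t) • v = ((2 * (d.N : F)) • ((d.t : F) • (v.1 - A *ᵥ v.2)) +
      A *ᵥ ((2 * (d.N : F) * d.t) • v.2), (2 * (d.N : F) * d.t) • v.2) := by
    ext i
    · simp only [mulVec_smul, Prod.smul_fst, Pi.smul_apply, Pi.add_apply, Pi.sub_apply, smul_eq_mul]
      ring
    · rfl
  rw [key]
  apply d.mem_bot_of_int hA C
  · exact fun i => int_mul_mem (int_mul_mem (int_mul_mem two_int hN) ht) (h2 i)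
  · intro i
    apply d.t_D
    have := Submodule.sub_mem _ (h1 i) (mulVec_mem hA.int h2 i)
    obtain ⟨c, hc⟩ := mem_int.1 this
    rw [Pi.sub_apply, hc]
    exact d.int_D c

theorem lat_span (hA : d.Simil A) (C : Submodule k ((ι → k) × (ι → k))) :
    Submodule.span F (d.lat A hA C : Set ((ι → F) × (ι → F))) = ⊤ := by
  have hs : (2 * (d.N : F) * d.t) ≠ 0 := by
    have := d.NF; have := d.tF; simp_all
  have hsingle : ∀ i j : ι, (Pi.single i (1 : F) : ι → F) j ∈ (1 : Submodule (𝓞 F) F) := by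
    intro i j
    by_cases hj : j = i
    · subst hj; simpa using nat_int (F := F) 1
    · simp [hj]
  have hmem : ∀ v : (ι → F) × (ι → F), (∀ i, v.1 i ∈ (1 : Submodule (𝓞 F) F)) →
      (∀ i, v.2 i ∈ (1 : Submodule (𝓞 F) F)) →
      v ∈ Submodule.span F (d.lat A hA C : Set ((ι → F) × (ι → F))) := by
    intro v h1 h2
    have := Submodule.smul_mem _ (2 * (d.N : F) * d.t)⁻¹
      (Submodule.subset_span (R := F) (d.lat_scaled hA C h1 h2))
    rwa [smul_smul, inv_mul_cancel₀ hs, one_smul] at this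
  rw [eq_top_iff]
  rintro ⟨u, x⟩ -
  have h1 : ((u, x) : (ι → F) × (ι → F)) = ∑ i, (u i • ((Pi.single i 1, 0) : (ι → F) × (ι → F)) +
      x i • ((0, Pi.single i 1) : (ι → F) × (ι → F))) := by
    ext j
    · simp [Finset.sum_apply, Pi.single_apply, Prod.fst_sum]
    · simp [Finset.sum_apply, Pi.single_apply, Prod.snd_sum]
  rw [h1]
  refine Submodule.sum_mem _ fun i _ => Submodule.add_mem _ (Submodule.smul_mem _ _ ?_)
    (Submodule.smul_mem _ _ ?_)
  · exact hmem _ (hsingle i) (fun _ => Submodule.zero_mem _)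
  · exact hmem _ (fun _ => Submodule.zero_mem _) (hsingle i)

/-- Vectors of the small lattice are integral and have norm divisible by the prime. -/
theorem small_norm (hA : d.Simil A) {v : (ι → F) × (ι → F)} (hv : v ∈ d.lat A hA ⊥) :
    (∀ i, v.1 i ∈ (1 : Submodule (𝓞 F) F)) ∧ (∀ i, v.2 i ∈ (1 : Submodule (𝓞 F) F)) ∧
      ∃ c : 𝓞 F, d.res c = 0 ∧ v.1 ⬝ᵥ v.1 + v.2 ⬝ᵥ v.2 = c := by
  obtain ⟨hb, hz⟩ := hv
  have hz' := Prod.ext_iff.1 hz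
  have hx : ∀ i, v.2 i ∈ (1 : Submodule (𝓞 F) F) := fun i =>
    mem_int.2 ((d.φ_ker _ (hb.1 i)).1 (congrFun hz'.1 i))
  have hbP : ∀ i, d.bCoord A v i ∈ d.P := fun i =>
    (d.ψ_ker _ (d.bCoord_mem hA hb.2 i)).1 (congrFun hz'.2 i)
  have hw := d.wCoord_mem_P hA hb hbP
  refine ⟨fun i => ?_, hx, ?_⟩
  · rw [d.fst_eq A v]
    refine Submodule.add_mem _ ?_ (mulVec_mem hA.int hx i)
    simp only [Pi.smul_apply, smul_eq_mul]
    rw [mul_assoc]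
    exact int_mul_mem two_int (mem_int.2 (d.N_D _ (hb.2 i)))
  · choose c hc hc' using fun i => d.N_P _ (hw i)
    choose b hbr hb' using fun i => d.N_P _ (hbP i)
    choose x hx' using fun i => mem_int.1 (hx i)
    refine ⟨4 * (∑ i, c i * c i) + 4 * (∑ i, x i * b i) +
      4 * (d.N : 𝓞 F) ^ 2 * (d.t : 𝓞 F) ^ 2 * ∑ i, x i * x i, ?_, ?_⟩
    · simp [hc, hbr, d.res_t]
    · rw [d.fst_dot hA]
      have e1 : (d.N : F) ^ 2 * (d.wCoord A v ⬝ᵥ d.wCoord A v) = ∑ i, (c i : F) * c i := by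
        simp only [← hc', dotProduct, Finset.mul_sum]
        exact Finset.sum_congr rfl fun i _ => by ring
      have e2 : (d.N : F) * (v.2 ⬝ᵥ d.bCoord A v) = ∑ i, (x i : F) * b i := by
        simp only [← hb', ← hx', dotProduct, Finset.mul_sum]
        exact Finset.sum_congr rfl fun i _ => by ring
      have e3 : v.2 ⬝ᵥ v.2 = ∑ i, (x i : F) * x i := by
        simp only [← hx', dotProduct]
      simp only [map_add, map_mul, map_sum, map_pow, map_natCast, map_ofNat]
      rw [← e1, ← e2, ← e3]
      ring

end LocalData

/-! ### Counting with alternating matrices -/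

namespace LocalData

open Matrix

section Counting

variable {k : Type} [Field k] {ι : Type} [Fintype ι]

variable (k ι) in
/-- The space of alternating matrices: skew-symmetric with zero diagonal (the second condition
matters only in characteristic two). -/
def altMat : Submodule k (Matrix ι ι k) where
  carrier := {T | Tᵀ = -T ∧ ∀ i, T i i = 0}
  zero_mem' := by simp
  add_mem' := by
    rintro S T ⟨h1, h2⟩ ⟨h1', h2'⟩
    refine ⟨by rw [transpose_add, h1, h1', neg_add], fun i => by simp [h2 i, h2' i]⟩
  smul_mem' := by
    rintro c T ⟨h1, h2⟩
    refine ⟨by rw [transpose_smul, h1, smul_neg], fun i => by simp [h2 i]⟩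

/-- An alternating matrix has vanishing quadratic form; off the diagonal the terms cancel in pairs. -/
theorem altMat_dot {T : Matrix ι ι k} (hT : T ∈ altMat k ι) (y : ι → k) :
    y ⬝ᵥ (T *ᵥ y) = 0 := by
  have hij : ∀ i j, T j i = -T i j := fun i j => by
    have := congrFun (congrFun hT.1 i) j
    simpa using this
  simp only [dotProduct, mulVec, Finset.mul_sum]
  rw [← Finset.sum_product' Finset.univ Finset.univ (fun i j => y i * (T i j * y j))]
  refine Finset.sum_involution (fun p _ => p.swap) ?_ ?_ (by simp) (by simp)
  · rintro ⟨i, j⟩ -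
    simp only [Prod.swap, hij i j]
    ring
  · rintro ⟨i, j⟩ - h he
    obtain rfl : j = i := congrArg Prod.fst he
    exact h (by simp [hT.2 j])

/-- The graph of an alternating matrix is self-dual. -/
theorem selfDual_graph [DecidableEq ι] {T : Matrix ι ι k} (hT : T ∈ altMat k ι) :
    SelfDual (LinearMap.graph T.mulVecLin) where
  iso := by
    rintro ⟨y, η⟩ h
    obtain rfl : η = T *ᵥ y := by simpa using h
    exact altMat_dot hT y
  max := by
    rintro ⟨y, η⟩ h
    rw [LinearMap.mem_graph_iff]
    have h1 : ∀ y' : ι → k, y' ⬝ᵥ (η - T *ᵥ y) = 0 := by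
      intro y'
      have h2 := h (y', T *ᵥ y') (by simp)
      have h3 : y ⬝ᵥ (T *ᵥ y') = -(y' ⬝ᵥ (T *ᵥ y)) := by
        rw [dotProduct_mulVec, ← mulVec_transpose, hT.1, neg_mulVec, neg_dotProduct,
          dotProduct_comm]
      simp only [h3] at h2
      rw [dotProduct_sub]
      linear_combination h2
    exact sub_eq_zero.1 (dotProduct_eq_zero_iff.1 fun w => by rw [dotProduct_comm]; exact h1 w)

/-- The vertical space `{0} × k^ι` is self-dual. -/
theorem selfDual_inf [DecidableEq ι] :
    SelfDual (Submodule.prod ⊥ ⊤ : Submodule k ((ι → k) × (ι → k))) where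
  iso := by
    rintro ⟨y, η⟩ h
    obtain rfl : y = 0 := by simpa using h
    simp
  max := by
    rintro ⟨y, η⟩ h
    have h1 : ∀ η' : ι → k, y ⬝ᵥ η' = 0 := by
      intro η'
      have := h (0, η') (by simp)
      simpa using this
    have : y = 0 := dotProduct_eq_zero_iff.1 h1
    simp [this]

theorem card_range_mul_card_ker {V W : Type} [AddCommGroup V] [Module k V] [AddCommGroup W]
    [Module k W] (f : V →ₗ[k] W) :
    Nat.card (LinearMap.ker f) * Nat.card (LinearMap.range f) = Nat.card V := by
  rw [Submodule.card_eq_card_quotient_mul_card (LinearMap.ker f),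
    Nat.card_congr f.quotKerEquivRange.toEquiv]

variable (k ι) in
/-- Evaluation of alternating matrices at `y`. -/
def altEval (y : ι → k) : altMat k ι →ₗ[k] (ι → k) where
  toFun T := (T : Matrix ι ι k) *ᵥ y
  map_add' S T := by simp [add_mulVec]
  map_smul' c T := by simp [smul_mulVec]

/-- The values `T y` are exactly the vectors orthogonal to `y`: if `y i ≠ 0` and `y·η = 0`, then
`T = (y i)⁻¹ (η eᵢᵀ - eᵢ ηᵀ)` is alternating and maps `y` to `η`. -/
theorem range_altEval [DecidableEq ι] {y : ι → k} (hy : y ≠ 0) :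
    LinearMap.range (altEval k ι y) = LinearMap.ker (dotProductBilin k k y) := by
  ext η
  rw [LinearMap.mem_ker, LinearMap.mem_range]
  constructor
  · rintro ⟨T, rfl⟩
    exact altMat_dot T.2 y
  · intro h
    replace h : y ⬝ᵥ η = 0 := h
    obtain ⟨i, hi⟩ := Function.ne_iff.1 hy
    simp only [Pi.zero_apply] at hi
    refine ⟨⟨(y i)⁻¹ • (vecMulVec η (Pi.single i 1) - vecMulVec (Pi.single i 1) η), ?_, ?_⟩, ?_⟩
    · rw [transpose_smul, transpose_sub, transpose_vecMulVec, transpose_vecMulVec, ← smul_neg,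
        neg_sub]
    · intro j
      simp [vecMulVec, mul_comm]
    · change ((y i)⁻¹ • (vecMulVec η (Pi.single i 1) - vecMulVec (Pi.single i 1) η)) *ᵥ y = η
      rw [smul_mulVec, sub_mulVec, vecMulVec_mulVec, vecMulVec_mulVec, dotProduct_comm η y, h]
      ext j
      simp [inv_mul_cancel_left₀ hi]

variable [Finite k]

/-- For fixed `y ≠ 0`, each `η` orthogonal to `y` is attained as `T y` by the same number
`q |Alt| / q^r` of alternating matrices, where `q = |k|` and `r = |ι|`. -/
theorem card_fibre [DecidableEq ι] {y : ι → k} (hy : y ≠ 0) {η : ι → k} (h : y ⬝ᵥ η = 0) :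
    Nat.card k ^ Fintype.card ι * Nat.card {T : altMat k ι // (T : Matrix ι ι k) *ᵥ y = η} =
      Nat.card k * Nat.card (altMat k ι) := by
  have h0 : η ∈ LinearMap.range (altEval k ι y) := by
    rw [range_altEval hy]; exact h
  obtain ⟨T₀, hT₀⟩ := h0
  have h1 : Nat.card {T : altMat k ι // (T : Matrix ι ι k) *ᵥ y = η} =
      Nat.card (LinearMap.ker (altEval k ι y)) := by
    refine Nat.card_congr ((Equiv.subRight T₀).subtypeEquiv fun T => ?_)
    rw [LinearMap.mem_ker, Equiv.subRight_apply, map_sub, sub_eq_zero, hT₀]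
    rfl
  have h2 := card_range_mul_card_ker (altEval k ι y)
  have h3 := card_range_mul_card_ker (dotProductBilin k k y)
  have h4 : LinearMap.range (dotProductBilin k k y) = ⊤ := by
    rw [LinearMap.range_eq_top]
    obtain ⟨i, hi⟩ := Function.ne_iff.1 hy
    intro z
    refine ⟨Pi.single i (z / y i), ?_⟩
    change y ⬝ᵥ Pi.single i (z / y i) = z
    rw [dotProduct_single, mul_div_cancel₀ _ hi]
  rw [range_altEval hy] at h2
  rw [h4, Nat.card_congr (Submodule.topEquiv (R := k) (M := k)).toEquiv, Nat.card_fun,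
    Nat.card_eq_fintype_card (α := ι)] at h3
  rw [h1, ← h3, ← h2]
  ring

open Classical in
/-- The counting identity: summed over all alternating `T`, the graphs of `T` together with the
vertical space cover `{0}` and the quadric `y ⬝ᵥ η = 0` with constant multiplicities. -/
theorem count_identity [Fintype (altMat k ι)] (c : (ι → k) × (ι → k)) :
    (Nat.card k : ℂ) ^ Fintype.card ι *
        ∑ T : altMat k ι, (if c ∈ LinearMap.graph (T : Matrix ι ι k).mulVecLin then 1 else 0) +
      Nat.card k * Nat.card (altMat k ι) *
        (if c ∈ (Submodule.prod ⊥ ⊤ : Submodule k ((ι → k) × (ι → k))) then 1 else 0) =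
    (Nat.card k : ℂ) ^ Fintype.card ι * Nat.card (altMat k ι) *
        (if c ∈ (⊥ : Submodule k ((ι → k) × (ι → k))) then 1 else 0) +
      Nat.card (altMat k ι) * (if c.1 ⬝ᵥ c.2 = 0 then (Nat.card k : ℂ) else 0) := by
  obtain ⟨y, η⟩ := c
  have hsum : (∑ T : altMat k ι,
      (if (y, η) ∈ LinearMap.graph (T : Matrix ι ι k).mulVecLin then (1 : ℂ) else 0)) =
      Nat.card {T : altMat k ι // (T : Matrix ι ι k) *ᵥ y = η} := by
    rw [Finset.sum_boole, Nat.card_eq_fintype_card, Fintype.card_subtype]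
    congr 2
    ext T
    simp [eq_comm]
  rw [hsum]
  by_cases hy : y = 0
  · subst hy
    by_cases hη : η = 0
    · subst hη
      have : Nat.card {T : altMat k ι // (T : Matrix ι ι k) *ᵥ (0 : ι → k) = 0} =
          Nat.card (altMat k ι) :=
        Nat.card_congr (Equiv.subtypeUnivEquiv fun T => by simp)
      rw [this]
      simp
      ring
    · have := @Nat.card_of_isEmpty {T : altMat k ι // (T : Matrix ι ι k) *ᵥ (0 : ι → k) = η}
        ⟨fun T => hη (by simpa using T.2.symm)⟩
      rw [this]
      simp [hη]
      ring
  · by_cases h : y ⬝ᵥ η = 0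
    · have := card_fibre hy h
      simp only [Submodule.mem_prod, Submodule.mem_bot, hy, Prod.mk_eq_zero, h]
      simp only [false_and, if_false, if_true, mul_zero, add_zero, zero_add]
      rw [mul_comm (Nat.card (altMat k ι) : ℂ)]
      exact_mod_cast this
    · have := @Nat.card_of_isEmpty {T : altMat k ι // (T : Matrix ι ι k) *ᵥ y = η}
        ⟨fun T => h (by rw [← T.2]; exact altMat_dot T.1.2 y)⟩
      rw [this]
      simp [hy, h]

end Counting

end LocalData

/-! ### Characters and the summands of theta series -/

section Theta

variable {F : Type} [Field F] [NumberField F]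

instance instFintypeRealEmbeddings : Fintype (F →+* ℝ) := Fintype.ofFinite _

/-- The additive character `z ↦ exp (2πi Tr z)` of `F`. -/
def chr (z : F) : ℂ := Complex.exp (2 * Real.pi * Complex.I * ((Algebra.trace ℚ F z : ℚ) : ℂ))

theorem chr_add (z w : F) : chr (z + w) = chr z * chr w := by
  rw [chr, chr, chr, ← Complex.exp_add, map_add]
  push_cast
  ring_nf

theorem chr_eq_one_iff (z : F) : chr z = 1 ↔ ∃ n : ℤ, Algebra.trace ℚ F z = n := by
  rw [chr, Complex.exp_eq_one_iff]
  have h : (2 * Real.pi * Complex.I : ℂ) ≠ 0 := Complex.two_pi_I_ne_zero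
  refine exists_congr fun n => ?_
  rw [mul_comm (n : ℂ), mul_right_inj' h]
  exact_mod_cast Iff.rfl

theorem chr_of_mem {z : F} (hz : z ∈ invDiff F) : chr z = 1 := by
  rw [chr_eq_one_iff]
  simpa using hz 1

/-- A section of the residue map. -/
def LocalData.out {k : Type} [Field k] (d : LocalData F k) : k → 𝓞 F :=
  Function.surjInv d.res_surj

theorem LocalData.res_out {k : Type} [Field k] (d : LocalData F k) (a : k) :
    d.res (d.out a) = a := Function.surjInv_eq d.res_surj a

open Classical in
/-- Orthogonality of characters on the residue field, in the form needed for `z = Q v`. -/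
theorem LocalData.char_sum {k : Type} [Field k] [Fintype k] (d : LocalData F k) {z : F} {c : 𝓞 F}
    (hz : z - c * d.e ∈ d.D) :
    ∑ a : k, chr ((d.out a : F) * z) = if z ∈ d.D then (Nat.card k : ℂ) else 0 := by
  -- `chr (b * z)` depends only on the residue class of `b`
  have hker : ∀ b : 𝓞 F, d.res b = 0 → chr ((b : F) * z) = 1 := by
    intro b hb
    apply chr_of_mem
    rw [← d.mem_D]
    have h1 := d.D.smul_mem b hz
    have h2 := (d.pair_e (b * c)).2 (by rw [map_mul, hb, zero_mul])
    have h3 := d.D.add_mem h1 h2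
    convert h3 using 1
    push_cast [Algebra.smul_def]
    ring
  have hadd : ∀ b b' : 𝓞 F, chr (((b + b' : 𝓞 F) : F) * z) = chr ((b : F) * z) * chr ((b' : F) * z) := by
    intro b b'
    rw [← chr_add]
    congr 1
    push_cast
    ring
  have hcong : ∀ b b' : 𝓞 F, d.res b = d.res b' → chr ((b : F) * z) = chr ((b' : F) * z) := by
    intro b b' h
    have := hadd b' (b - b')
    rwa [add_sub_cancel, hker (b - b') (by rw [map_sub, h, sub_self]), mul_one] at this
  split_ifs with h
  · rw [Finset.sum_congr rfl (g := fun _ => (1 : ℂ))]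
    · simp
    · intro a _
      apply chr_of_mem
      rw [← d.mem_D]
      have := d.D.smul_mem (d.out a) h
      rwa [Algebra.smul_def] at this
  · rw [d.mem_D] at h
    have h' : ∃ c₀ : 𝓞 F, chr ((c₀ : F) * z) ≠ 1 := by
      by_contra! hc
      refine h fun c₀ => ?_
      rw [mul_comm]
      exact (chr_eq_one_iff _).1 (hc c₀)
    obtain ⟨c₀, hc₀⟩ := h'
    have hS : (∑ a : k, chr ((d.out a : F) * z)) * chr ((c₀ : F) * z) =
        ∑ a : k, chr ((d.out a : F) * z) := by
      rw [Finset.sum_mul, ← Equiv.sum_comp (Equiv.addRight (d.res c₀)) (fun a => chr ((d.out a : F) * z))]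
      refine Finset.sum_congr rfl fun a _ => ?_
      rw [← hadd]
      apply hcong
      simp [d.res_out]
    have h2 : (∑ a : k, chr ((d.out a : F) * z)) * (chr ((c₀ : F) * z) - 1) = 0 := by
      rw [mul_sub, hS, mul_one, sub_self]
    exact (mul_eq_zero.1 h2).resolve_right (sub_ne_zero.2 hc₀)

/-- The summand of the theta series at a vector with `Q v = z`. -/
def expQ (τ : (F →+* ℝ) → ℂ) (z : F) : ℂ :=
  Complex.exp (2 * Real.pi * Complex.I * ∑ σ : F →+* ℝ, ((σ z : ℝ) : ℂ) * τ σ)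

theorem expQ_add (τ : (F →+* ℝ) → ℂ) (z w : F) : expQ τ (z + w) = expQ τ z * expQ τ w := by
  rw [expQ, expQ, expQ, ← Complex.exp_add, ← mul_add, ← Finset.sum_add_distrib]
  congr 2
  refine Finset.sum_congr rfl fun σ _ => ?_
  rw [map_add]
  push_cast
  ring

theorem expQ_zero (τ : (F →+* ℝ) → ℂ) : expQ τ (0 : F) = 1 := by
  simp [expQ]

theorem expQ_sum {α : Type*} (s : Finset α) (τ : (F →+* ℝ) → ℂ) (z : α → F) :
    expQ τ (∑ i ∈ s, z i) = ∏ i ∈ s, expQ τ (z i) := by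
  classical
  induction s using Finset.induction_on with
  | empty => simp [expQ_zero]
  | insert a s ha ih => rw [Finset.sum_insert ha, Finset.prod_insert ha, expQ_add, ih]

/-- Translating `τ` by `a ∈ F` multiplies the summand by the character value `exp (2πi Tr (a z))`. -/
theorem expQ_shift (htr : Nat.card (F →+* ℝ) = Module.finrank ℚ F) (τ : (F →+* ℝ) → ℂ) (a z : F) :
    expQ (fun σ => τ σ + ((σ a : ℝ) : ℂ)) z = chr (a * z) * expQ τ z := by
  have h : ((Algebra.trace ℚ F (a * z) : ℚ) : ℂ) = ∑ σ : F →+* ℝ, ((σ a : ℝ) : ℂ) * ((σ z : ℝ) : ℂ) := by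
    have := trace_eq_sum_real htr (a * z)
    have h2 : (((Algebra.trace ℚ F (a * z) : ℚ) : ℝ) : ℂ) = ((∑ σ : F →+* ℝ, σ (a * z) : ℝ) : ℂ) :=
      congrArg _ this
    push_cast at h2
    rw [h2]
    exact Finset.sum_congr rfl fun σ _ => by rw [map_mul]; push_cast; rfl
  rw [expQ, chr, expQ, ← Complex.exp_add, h, ← mul_add, ← Finset.sum_add_distrib]
  congr 2
  exact Finset.sum_congr rfl fun σ _ => by ring

theorem norm_expQ (τ : (F →+* ℝ) → ℂ) (z : F) :
    ‖expQ τ z‖ = Real.exp (-∑ σ : F →+* ℝ, 2 * Real.pi * (τ σ).im * σ z) := by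
  rw [expQ, Complex.norm_exp]
  congr 1
  rw [mul_assoc, mul_assoc, Complex.mul_re]
  simp only [Complex.re_ofNat, Complex.im_ofNat, zero_mul, sub_zero, Complex.re_ofReal_mul,
    Complex.I_mul_re, Complex.im_sum, Complex.im_ofReal_mul]
  rw [Finset.sum_congr rfl fun σ _ => (by ring : 2 * Real.pi * (τ σ).im * σ z = 2 * Real.pi * (σ z * (τ σ).im)),
    ← Finset.mul_sum]
  ring

open LocalData Matrix

/-- Absolute convergence of the theta series over `t⁻¹ (O^ι × O^ι)`. -/
theorem summable_scaled (htr : Nat.card (F →+* ℝ) = Module.finrank ℚ F) {ι : Type} [Fintype ι]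
    [DecidableEq ι] {N t : ℕ} (hN : 0 < N) (ht : 0 < t) {τ : (F →+* ℝ) → ℂ} (hτ : ∀ σ, 0 < (τ σ).im) :
    Summable fun a : ι ⊕ ι → 𝓞 F =>
      ‖expQ τ (qf F ι N (fun i => (t : F)⁻¹ * a (.inl i), fun i => (t : F)⁻¹ * a (.inr i)))‖ := by
  set c : (F →+* ℝ) → ℝ := fun σ => 2 * Real.pi * (τ σ).im * ((4 * (N : ℝ))⁻¹ * (t : ℝ)⁻¹ ^ 2) with hc
  have hc0 : ∀ σ, 0 < c σ := by
    intro σ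
    have := hτ σ
    have : (0 : ℝ) < N := by exact_mod_cast hN
    have : (0 : ℝ) < t := by exact_mod_cast ht
    positivity
  set g : F → ℂ := fun z => expQ τ ((4 * (N : F))⁻¹ * ((t : F)⁻¹ ^ 2 * z ^ 2)) with hg
  have hgn : Summable fun a : 𝓞 F => ‖g (a : F)‖ := by
    refine (summable_gauss_int htr c hc0).congr fun a => ?_
    rw [hg, norm_expQ]
    congr 2
    refine Finset.sum_congr rfl fun σ _ => ?_
    simp only [hc, map_mul, map_inv₀, map_pow, map_natCast, map_ofNat]
    ring
  have h := summable_prod_fintype (ι := ι ⊕ ι) (fun a : 𝓞 F => g a) hgn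
  refine h.congr fun a => ?_
  rw [hg, ← expQ_sum]
  congr 2
  rw [Fintype.sum_sum_type, qf_apply]
  simp only [dotProduct, mul_add, Finset.mul_sum]
  congr 1 <;> exact Finset.sum_congr rfl fun i _ => by ring

end Theta

/-! ### The theta identity -/

namespace LocalData

open Matrix

variable {F : Type} [Field F] [NumberField F] {k : Type} [Field k] (d : LocalData F k)
  {ι : Type} [Fintype ι] [DecidableEq ι] {A : Matrix ι ι F}

/-- The theta series of `d.lat A hA C`, as a sum over the whole space. -/
def theta (hA : d.Simil A) (C : Submodule k ((ι → k) × (ι → k))) (τ : (F →+* ℝ) → ℂ) : ℂ :=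
  ∑' v, (d.lat A hA C : Set ((ι → F) × (ι → F))).indicator (fun v => expQ τ (qf F ι d.N v)) v

/-- Absolute convergence, since every `lat C` lies in `t⁻¹ (O^ι × O^ι)`. -/
theorem summable_lat (htr : Nat.card (F →+* ℝ) = Module.finrank ℚ F) (hA : d.Simil A)
    (C : Submodule k ((ι → k) × (ι → k))) {τ : (F →+* ℝ) → ℂ} (hτ : ∀ σ, 0 < (τ σ).im) :
    Summable fun v => ‖(d.lat A hA C : Set ((ι → F) × (ι → F))).indicator
      (fun v => expQ τ (qf F ι d.N v)) v‖ := by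
  have ht := d.tF
  let G : (ι ⊕ ι → 𝓞 F) → (ι → F) × (ι → F) := fun a =>
    (fun i => (d.t : F)⁻¹ * a (.inl i), fun i => (d.t : F)⁻¹ * a (.inr i))
  have hG : Function.Injective G := by
    intro a b h
    obtain ⟨h1, h2⟩ := Prod.ext_iff.1 h
    have hinj : ∀ x y : 𝓞 F, (d.t : F)⁻¹ * x = (d.t : F)⁻¹ * y → x = y := fun x y hxy =>
      RingOfIntegers.coe_injective (mul_left_cancel₀ (inv_ne_zero ht) hxy)
    funext j
    rcases j with i | i
    · exact hinj _ _ (congrFun h1 i)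
    · exact hinj _ _ (congrFun h2 i)
  rw [← hG.summable_iff]
  · refine (summable_scaled htr d.hN d.ht hτ).of_nonneg_of_le (fun _ => norm_nonneg _) fun a => ?_
    exact norm_indicator_le_norm_self _ _
  · intro v hv
    rw [Set.indicator_of_notMem, norm_zero]
    intro hmem
    apply hv
    obtain ⟨h1, h2⟩ := d.big_bounded hA hmem.1
    choose a ha using fun i => mem_int.1 (h1 i)
    choose b hb using fun i => mem_int.1 (h2 i)
    refine ⟨Sum.elim a b, ?_⟩
    ext i
    · change (d.t : F)⁻¹ * (a i : F) = _
      rw [← ha, inv_mul_cancel_left₀ ht]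
    · change (d.t : F)⁻¹ * (b i : F) = _
      rw [← hb, inv_mul_cancel_left₀ ht]

/-- If all theta series of self-dual type vanish at `τ`, so does this combination of the theta
series of the smallest lattice and of translates of that of the largest one. -/
theorem theta_identity [Fintype k] (htr : Nat.card (F →+* ℝ) = Module.finrank ℚ F)
    (hA : d.Simil A) {τ : (F →+* ℝ) → ℂ} (hτ : ∀ σ, 0 < (τ σ).im)
    (hvan : ∀ C, SelfDual C → d.theta hA C τ = 0) :
    (Nat.card k : ℂ) ^ Fintype.card ι * d.theta hA ⊥ τ +
      ∑ a : k, d.theta hA ⊤ (fun σ => τ σ + ((σ (d.out a : F) : ℝ) : ℂ)) = 0 := by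
  classical
  let _ : Fintype (altMat k ι) := Fintype.ofFinite _
  have hs := fun C => (d.summable_lat htr hA C hτ).of_norm
  have hτ' : ∀ a : k, ∀ σ : F →+* ℝ, 0 < (τ σ + ((σ (d.out a : F) : ℝ) : ℂ)).im := by
    intro a σ
    simpa using hτ σ
  have hs' := fun a => (d.summable_lat htr hA ⊤ (hτ' a)).of_norm
  -- the pointwise identity is `count_identity` times the summand, the indicator of the quadric
  -- being expanded in characters
  have hpt : ∀ v : (ι → F) × (ι → F),
      (Nat.card k : ℂ) ^ Fintype.card ι * ∑ T : altMat k ι,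
        (d.lat A hA (LinearMap.graph (T : Matrix ι ι k).mulVecLin) :
          Set ((ι → F) × (ι → F))).indicator (fun v => expQ τ (qf F ι d.N v)) v +
      Nat.card k * Nat.card (altMat k ι) *
        (d.lat A hA (Submodule.prod ⊥ ⊤) : Set ((ι → F) × (ι → F))).indicator
          (fun v => expQ τ (qf F ι d.N v)) v =
      (Nat.card k : ℂ) ^ Fintype.card ι * Nat.card (altMat k ι) *
        (d.lat A hA ⊥ : Set ((ι → F) × (ι → F))).indicator (fun v => expQ τ (qf F ι d.N v)) v +
      Nat.card (altMat k ι) * ∑ a : k, (d.lat A hA ⊤ : Set ((ι → F) × (ι → F))).indicator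
        (fun v => expQ (fun σ => τ σ + ((σ (d.out a : F) : ℝ) : ℂ)) (qf F ι d.N v)) v := by
    intro v
    by_cases hv : v ∈ d.big A
    · have hind : ∀ (C : Submodule k ((ι → k) × (ι → k))),
          (d.lat A hA C : Set ((ι → F) × (ι → F))).indicator (fun v => expQ τ (qf F ι d.N v)) v =
          (if (d.Phi v, d.Psi A v) ∈ C then 1 else 0) * expQ τ (qf F ι d.N v) := by
        intro C
        have : v ∈ (d.lat A hA C : Set ((ι → F) × (ι → F))) ↔ (d.Phi v, d.Psi A v) ∈ C :=
          ⟨fun h => h.2, fun h => ⟨hv, h⟩⟩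
        by_cases h : (d.Phi v, d.Psi A v) ∈ C
        · rw [Set.indicator_of_mem (this.2 h), if_pos h, one_mul]
        · rw [Set.indicator_of_notMem (fun h' => h (this.1 h')), if_neg h, zero_mul]
      have htop : ∀ a : k, (d.lat A hA ⊤ : Set ((ι → F) × (ι → F))).indicator
          (fun v => expQ (fun σ => τ σ + ((σ (d.out a : F) : ℝ) : ℂ)) (qf F ι d.N v)) v =
          chr ((d.out a : F) * qf F ι d.N v) * expQ τ (qf F ι d.N v) := by
        intro a
        have hmem : v ∈ (d.lat A hA ⊤ : Set ((ι → F) × (ι → F))) := ⟨hv, Submodule.mem_top⟩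
        rw [Set.indicator_of_mem hmem, expQ_shift htr]
      obtain ⟨c, -, hc⟩ := d.qf_mod hA hv
      simp only [hind, htop]
      rw [← Finset.sum_mul, ← Finset.sum_mul, d.char_sum hc]
      have h1 := count_identity (d.Phi v, d.Psi A v)
      simp only [d.qf_mem_iff hA hv]
      linear_combination expQ τ (qf F ι d.N v) * h1
    · have hind : ∀ (C : Submodule k ((ι → k) × (ι → k))) (f : (ι → F) × (ι → F) → ℂ),
          (d.lat A hA C : Set ((ι → F) × (ι → F))).indicator f v = 0 := fun C f =>
        Set.indicator_of_notMem (fun h => hv h.1) _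
      simp [hind]
  have h := tsum_congr (L := SummationFilter.unconditional _) hpt
  rw [Summable.tsum_add, Summable.tsum_add, tsum_mul_left, tsum_mul_left, tsum_mul_left,
    tsum_mul_left, Summable.tsum_finsetSum, Summable.tsum_finsetSum] at h
  · have e1 : ∀ T : altMat k ι, ∑' v, (d.lat A hA (LinearMap.graph (T : Matrix ι ι k).mulVecLin) :
        Set ((ι → F) × (ι → F))).indicator (fun v => expQ τ (qf F ι d.N v)) v = 0 := fun T =>
      hvan _ (selfDual_graph T.2)
    have e2 : ∑' v, (d.lat A hA (Submodule.prod ⊥ ⊤) : Set ((ι → F) × (ι → F))).indicator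
        (fun v => expQ τ (qf F ι d.N v)) v = 0 := hvan _ selfDual_inf
    simp only [e1, e2, Finset.sum_const_zero, mul_zero, add_zero] at h
    have hAlt : (Nat.card (altMat k ι) : ℂ) ≠ 0 := Nat.cast_ne_zero.2 Nat.card_pos.ne'
    refine (mul_eq_zero.1 ?_).resolve_left hAlt
    simp only [theta]
    rw [mul_add, ← mul_assoc, mul_comm (Nat.card (altMat k ι) : ℂ) (_ ^ _)]
    exact h.symm
  · exact fun a _ => hs' a
  · exact fun T _ => hs _
  · exact (hs _).mul_left _
  · exact (summable_sum fun a _ => hs' a).mul_left _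
  · exact (summable_sum fun T _ => hs _).mul_left _
  · exact (hs _).mul_left _

/-! ### Orthogonal powers -/

/-- The orthogonal sum of `m` copies of `A`. -/
abbrev blk (A : Matrix ι ι F) (m : ℕ) : Matrix (ι × Fin m) (ι × Fin m) F :=
  blockDiagonal fun _ : Fin m => A

/-- A vector over `ι × Fin m` as a family of `m` vectors over `ι`. -/
def unblk (m : ℕ) : ((ι × Fin m → F) × (ι × Fin m → F)) ≃ (Fin m → (ι → F) × (ι → F)) where
  toFun v j := (fun i => v.1 (i, j), fun i => v.2 (i, j))
  invFun w := (fun p => (w p.2).1 p.1, fun p => (w p.2).2 p.1)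
  left_inv _ := rfl
  right_inv _ := rfl

theorem blk_mulVec (B : Matrix ι ι F) (m : ℕ) (x : ι × Fin m → F) (i : ι) (j : Fin m) :
    (blockDiagonal (fun _ : Fin m => B) *ᵥ x) (i, j) = (B *ᵥ fun i' => x (i', j)) i := by
  simp [mulVec, dotProduct, Fintype.sum_prod_type, blockDiagonal_apply]

theorem simil_blk (hA : d.Simil A) (m : ℕ) : d.Simil (blk A m) where
  int := by
    rintro ⟨i, j⟩ ⟨i', j'⟩
    change (blockDiagonal fun _ : Fin m => A) (i, j) (i', j') ∈ _
    rw [blockDiagonal_apply]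
    split_ifs
    · exact hA.int _ _
    · exact Submodule.zero_mem _
  mul_t := by
    rw [blockDiagonal_transpose, ← blockDiagonal_mul]
    simp only [hA.mul_t]
    rw [← blockDiagonal_one, ← blockDiagonal_smul]
    rfl
  t_mul := by
    rw [blockDiagonal_transpose, ← blockDiagonal_mul]
    simp only [hA.t_mul]
    rw [← blockDiagonal_one, ← blockDiagonal_smul]
    rfl

theorem wCoord_blk (m : ℕ) (v : (ι × Fin m → F) × (ι × Fin m → F)) (i : ι) (j : Fin m) :
    d.wCoord (blk A m) v (i, j) = d.wCoord A (unblk m v j) i := by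
  simp only [wCoord, Pi.smul_apply, Pi.sub_apply, blk_mulVec]
  rfl

theorem bCoord_blk (m : ℕ) (v : (ι × Fin m → F) × (ι × Fin m → F)) (i : ι) (j : Fin m) :
    d.bCoord (blk A m) v (i, j) = d.bCoord A (unblk m v j) i := by
  simp only [bCoord]
  rw [blockDiagonal_transpose, blk_mulVec]
  simp only [wCoord_blk]

theorem mem_big_blk (m : ℕ) (v : (ι × Fin m → F) × (ι × Fin m → F)) :
    v ∈ d.big (blk A m) ↔ ∀ j, unblk m v j ∈ d.big A := by
  constructor
  · rintro ⟨h1, h2⟩ j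
    exact ⟨fun i => h1 (i, j), fun i => by rw [← wCoord_blk]; exact h2 (i, j)⟩
  · intro h
    exact ⟨fun p => (h p.2).1 p.1, fun p => by
      obtain ⟨i, j⟩ := p
      rw [wCoord_blk]; exact (h j).2 i⟩

theorem mem_top_blk (hA : d.Simil A) (m : ℕ) (v : (ι × Fin m → F) × (ι × Fin m → F)) :
    v ∈ d.lat (blk A m) (d.simil_blk hA m) ⊤ ↔ ∀ j, unblk m v j ∈ d.lat A hA ⊤ := by
  have h1 : v ∈ d.lat (blk A m) (d.simil_blk hA m) ⊤ ↔ v ∈ d.big (blk A m) :=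
    ⟨fun h => h.1, fun h => ⟨h, Submodule.mem_top⟩⟩
  rw [h1, mem_big_blk]
  exact ⟨fun h j => ⟨h j, Submodule.mem_top⟩, fun h j => (h j).1⟩

theorem mem_bot_blk (hA : d.Simil A) (m : ℕ) (v : (ι × Fin m → F) × (ι × Fin m → F)) :
    v ∈ d.lat (blk A m) (d.simil_blk hA m) ⊥ ↔ ∀ j, unblk m v j ∈ d.lat A hA ⊥ := by
  constructor
  · rintro ⟨h1, h2⟩ j
    obtain ⟨h3, h4⟩ := Prod.ext_iff.1 h2
    refine ⟨(d.mem_big_blk m v).1 h1 j, Prod.ext (funext fun i => ?_) (funext fun i => ?_)⟩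
    · exact congrFun h3 (i, j)
    · have := congrFun h4 (i, j)
      simp only [Psi, bCoord_blk] at this
      exact this
  · intro h
    refine ⟨(d.mem_big_blk m v).2 fun j => (h j).1, Prod.ext (funext ?_) (funext ?_)⟩
    · rintro ⟨i, j⟩
      exact congrFun (Prod.ext_iff.1 (h j).2).1 i
    · rintro ⟨i, j⟩
      simp only [Psi, bCoord_blk]
      exact congrFun (Prod.ext_iff.1 (h j).2).2 i

theorem qf_blk (N m : ℕ) (v : (ι × Fin m → F) × (ι × Fin m → F)) :
    qf F (ι × Fin m) N v = ∑ j, qf F ι N (unblk m v j) := by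
  simp only [qf_apply, ← Finset.mul_sum, Finset.sum_add_distrib, dotProduct,
    Fintype.sum_prod_type_right]
  rfl

/-- If a lattice decomposes as an orthogonal sum of `m` copies of another one, its theta series is the
`m`-th power. -/
theorem theta_blk (htr : Nat.card (F →+* ℝ) = Module.finrank ℚ F) (hA : d.Simil A) (m : ℕ)
    {C : Submodule k ((ι → k) × (ι → k))}
    {C' : Submodule k ((ι × Fin m → k) × (ι × Fin m → k))}
    (hC : ∀ v, v ∈ d.lat (blk A m) (d.simil_blk hA m) C' ↔ ∀ j, unblk m v j ∈ d.lat A hA C)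
    {τ : (F →+* ℝ) → ℂ} (hτ : ∀ σ, 0 < (τ σ).im) :
    d.theta (d.simil_blk hA m) C' τ = d.theta hA C τ ^ m := by
  rw [theta, theta, ← (summable_prod_fin _ (d.summable_lat htr hA C hτ) m).2,
    ← (unblk m).tsum_eq]
  refine tsum_congr fun v => ?_
  by_cases h : v ∈ d.lat (blk A m) (d.simil_blk hA m) C'
  · rw [Set.indicator_of_mem h, qf_blk, expQ_sum]
    refine Finset.prod_congr rfl fun j _ => ?_
    rw [Set.indicator_of_mem ((hC v).1 h j)]
  · rw [Set.indicator_of_notMem h]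
    obtain ⟨j, hj⟩ := not_forall.1 (fun h' => h ((hC v).2 h'))
    rw [Finset.prod_eq_zero (Finset.mem_univ j)]
    exact Set.indicator_of_notMem hj _

/-- If the theta series of all even unimodular lattices `d.lat (blk A m) _ C` vanish at `τ`, then
so does that of the small lattice `d.lat A _ ⊥`: for every `m`, the identity `theta_identity` for the
orthogonal sum of `m` copies says that the `m`-th power sum of `1 + |k|` fixed numbers is zero, and
`powersum_zero` applies. -/
theorem theta_bot_eq_zero [Fintype k] (htr : Nat.card (F →+* ℝ) = Module.finrank ℚ F)
    (hA : d.Simil A) {τ : (F →+* ℝ) → ℂ} (hτ : ∀ σ, 0 < (τ σ).im)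
    (hvan : ∀ m, 0 < m → ∀ C, SelfDual C → d.theta (d.simil_blk hA m) C τ = 0) :
    d.theta hA ⊥ τ = 0 := by
  classical
  have hτ' : ∀ a : k, ∀ σ : F →+* ℝ, 0 < (τ σ + ((σ (d.out a : F) : ℝ) : ℂ)).im := by
    intro a σ
    simpa using hτ σ
  let z : Option k → ℂ := fun o => o.elim ((Nat.card k : ℂ) ^ Fintype.card ι * d.theta hA ⊥ τ)
    fun a => d.theta hA ⊤ (fun σ => τ σ + ((σ (d.out a : F) : ℝ) : ℂ))
  have hz := powersum_zero Finset.univ z (fun m hm => by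
    have h := d.theta_identity htr (d.simil_blk hA m) hτ (hvan m hm)
    rw [d.theta_blk htr hA m (d.mem_bot_blk hA m) hτ, Finset.sum_congr rfl fun a _ =>
      d.theta_blk htr hA m (d.mem_top_blk hA m) (hτ' a)] at h
    rw [Fintype.sum_option, ← h]
    congr 1
    simp only [z, Option.elim, mul_pow, Fintype.card_prod, Fintype.card_fin, pow_mul])
  have h0 := hz none (Finset.mem_univ _)
  have hq : (Nat.card k : ℂ) ^ Fintype.card ι ≠ 0 :=
    pow_ne_zero _ (Nat.cast_ne_zero.2 Nat.card_pos.ne')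
  exact (mul_eq_zero.1 h0).resolve_left hq

end LocalData

/-! ### Choice of the prime, and transport to coordinates -/

section Conclusion

open LocalData Matrix

variable {F : Type} [Field F] [NumberField F]

/-- Left multiplication by an integral quaternion of norm `4 N² t² - 1` is a similitude of the
required kind; such a quaternion exists by Lagrange's four squares theorem. -/
theorem exists_simil {k : Type} [Field k] (d : LocalData F k) :
    ∃ A : Matrix (Fin 4) (Fin 4) F, d.Simil A := by
  obtain ⟨a, b, c, e, h⟩ := Nat.sum_four_squares (4 * d.N ^ 2 * d.t ^ 2 - 1)
  have hpos : 1 ≤ 4 * d.N ^ 2 * d.t ^ 2 := by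
    have := d.hN
    have := d.ht
    exact Nat.succ_le_of_lt (by positivity)
  have h' : (a : F) ^ 2 + (b : F) ^ 2 + (c : F) ^ 2 + (e : F) ^ 2 =
      4 * (d.N : F) ^ 2 * (d.t : F) ^ 2 - 1 := by
    have h2 := congrArg (Nat.cast : ℕ → F) h
    rw [Nat.cast_sub hpos] at h2
    push_cast at h2
    exact h2
  refine ⟨!![(a : F), b, c, e; -b, a, -e, c; -c, e, a, -b; -e, -c, b, a], ?_, ?_, ?_⟩
  · have hn := fun n : ℕ => nat_int (F := F) n
    have hn' := fun n : ℕ => Submodule.neg_mem _ (nat_int (F := F) n)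
    intro i j
    fin_cases i <;> fin_cases j <;> first | exact hn _ | exact hn' _
  · rw [← h']
    ext i j
    fin_cases i <;> fin_cases j <;>
      simp [Matrix.mul_apply, Fin.sum_univ_four] <;> ring
  · rw [← h']
    ext i j
    fin_cases i <;> fin_cases j <;>
      simp [Matrix.mul_apply, Fin.sum_univ_four] <;> ring

theorem nonempty_embedding (htr : Nat.card (F →+* ℝ) = Module.finrank ℚ F) :
    Nonempty (F →+* ℝ) := by
  have : 0 < Nat.card (F →+* ℝ) := by rw [htr]; exact Module.finrank_pos
  exact (Nat.card_pos_iff.1 this).1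

/-- For a suitable prime the small lattice is so sparse that its theta series is dominated by the
term of the zero vector. -/
theorem exists_theta_bot_ne_zero (htr : Nat.card (F →+* ℝ) = Module.finrank ℚ F)
    {τ : (F →+* ℝ) → ℂ} (hτ : ∀ σ, 0 < (τ σ).im) :
    ∃ (k : Type) (_ : Field k) (_ : Finite k) (d : LocalData F k)
      (A : Matrix (Fin 4) (Fin 4) F) (hA : d.Simil A), d.theta hA ⊥ τ ≠ 0 := by
  classical
  obtain ⟨N, hN, hclear⟩ := exists_clear F
  obtain ⟨σ₀⟩ := nonempty_embedding htr
  let G : (Fin 4 ⊕ Fin 4 → 𝓞 F) → (Fin 4 → F) × (Fin 4 → F) := fun a =>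
    (fun i => (a (.inl i) : F), fun i => (a (.inr i) : F))
  have hG : Function.Injective G := by
    intro a b h
    obtain ⟨h1, h2⟩ := Prod.ext_iff.1 h
    funext j
    rcases j with i | i
    · exact RingOfIntegers.coe_injective (congrFun h1 i)
    · exact RingOfIntegers.coe_injective (congrFun h2 i)
  have hsum : Summable fun a => ‖expQ τ (qf F (Fin 4) N (G a))‖ := by
    have := summable_scaled htr (ι := Fin 4) hN one_pos hτ
    simpa [G] using this
  -- outside a finite set `S`, the terms over the integral vectors sum to less than `1`
  have htail := (tendsto_order.1 (tendsto_tsum_compl_atTop_zero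
    fun a => ‖expQ τ (qf F (Fin 4) N (G a))‖)).2 1 one_pos
  obtain ⟨S₀, hS₀⟩ := Filter.eventually_atTop.1 htail
  set S : Finset (Fin 4 ⊕ Fin 4 → 𝓞 F) := insert 0 S₀ with hSdef
  have hS := hS₀ S (Finset.subset_insert _ _)
  let nrm : (Fin 4 ⊕ Fin 4 → 𝓞 F) → 𝓞 F := fun a => ∑ j, a j * a j
  have hnrm : ∀ a, nrm a = 0 → a = 0 := by
    intro a h
    have h1 : ∑ j, σ₀ (a j : F) * σ₀ (a j : F) = 0 := by
      have := congrArg (fun z : 𝓞 F => σ₀ (z : F)) h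
      simpa [nrm] using this
    rw [Finset.sum_eq_zero_iff_of_nonneg fun j _ => mul_self_nonneg _] at h1
    funext j
    have h2 := mul_self_eq_zero.1 (h1 j (Finset.mem_univ j))
    rw [map_eq_zero] at h2
    exact RingOfIntegers.coe_injective (by simpa using h2)
  -- a prime dividing none of the norms from `S` keeps the small lattice away from `S`, except for `0`
  have hβ : ∏ a ∈ S.erase 0, nrm a ≠ 0 :=
    Finset.prod_ne_zero_iff.2 fun a ha h => (Finset.mem_erase.1 ha).1 (hnrm a h)
  obtain ⟨k, _, _, d, rfl, hres⟩ := exists_localData N hN hclear _ hβ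
  obtain ⟨A, hA⟩ := exists_simil d
  refine ⟨k, _, inferInstance, d, A, hA, ?_⟩
  set f : (Fin 4 → F) × (Fin 4 → F) → ℂ := fun v => expQ τ (qf F (Fin 4) d.N v) with hf
  set M : Set ((Fin 4 → F) × (Fin 4 → F)) := (d.lat A hA ⊥ : Set ((Fin 4 → F) × (Fin 4 → F))) with hM
  have h1 : d.theta hA ⊥ τ = ∑' a, M.indicator f (G a) := by
    refine (hG.tsum_eq fun v hv => ?_).symm
    have hv' : v ∈ d.lat A hA ⊥ := by
      by_contra h
      exact hv (Set.indicator_of_notMem h _)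
    obtain ⟨h1, h2, -⟩ := d.small_norm hA hv'
    choose a ha using fun i => mem_int.1 (h1 i)
    choose b hb using fun i => mem_int.1 (h2 i)
    refine ⟨Sum.elim a b, ?_⟩
    ext i
    · exact (ha i).symm
    · exact (hb i).symm
  have hle : ∀ a, ‖M.indicator f (G a)‖ ≤ ‖f (G a)‖ := fun a => norm_indicator_le_norm_self _ _
  have hsn : Summable fun a => ‖M.indicator f (G a)‖ :=
    hsum.of_nonneg_of_le (fun _ => norm_nonneg _) hle
  have hfin : ∑ a ∈ S, M.indicator f (G a) = 1 := by
    rw [Finset.sum_eq_single_of_mem 0 (Finset.mem_insert_self _ _)]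
    · have hG0 : G 0 = 0 := by
        ext i <;> simp [G]
      have h0 : (0 : (Fin 4 → F) × (Fin 4 → F)) ∈ M := Submodule.zero_mem (d.lat A hA ⊥)
      rw [hG0, Set.indicator_of_mem h0, hf]
      simp [expQ_zero]
    · intro a ha ha0
      refine Set.indicator_of_notMem (fun hmem => hres ?_) _
      obtain ⟨-, -, c, hc, hc'⟩ := d.small_norm hA hmem
      have hcn : c = nrm a := by
        refine RingOfIntegers.coe_injective (hc'.symm.trans ?_)
        simp [nrm, G, dotProduct]
      rw [map_prod]
      exact Finset.prod_eq_zero (Finset.mem_erase.2 ⟨ha0, ha⟩) (by rw [← hcn, hc])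
  have h2 := hsn.of_norm.sum_add_tsum_subtype_compl S
  rw [hfin, ← h1] at h2
  have h3 : ‖∑' a : {a // a ∉ S}, M.indicator f (G a)‖ < 1 := by
    refine lt_of_le_of_lt ?_ hS
    have hs1 := hsum.subtype {a | a ∉ S}
    have hs2 := hsn.subtype {a | a ∉ S}
    exact (norm_tsum_le_tsum_norm hs2).trans (hs2.tsum_le_tsum (fun a => hle a.1) hs1)
  intro h0
  rw [h0] at h2
  rw [eq_neg_of_add_eq_zero_right h2, norm_neg] at h3
  simp at h3

/-- An even unimodular lattice in an abstract vector space yields one in coordinate space. -/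
theorem exists_of_space {V : Type} [AddCommGroup V] [Module F V] [Module (𝓞 F) V]
    [IsScalarTower (𝓞 F) F V] [FiniteDimensional F V] [Nontrivial V]
    (Q : QuadraticForm F V) (L : Submodule (𝓞 F) V) (hFG : L.FG)
    (hspan : Submodule.span F (L : Set V) = ⊤) (heven : ∀ x ∈ L, Q x ∈ invDiff F)
    (hpos : ∀ (σ : F →+* ℝ) (x : V), x ≠ 0 → 0 < σ (Q x))
    (hdual : (L : Set V) = {y | ∀ x ∈ L, QuadraticMap.polar (⇑Q) y x ∈ invDiff F})
    {τ₀ : (F →+* ℝ) → ℂ} (hθ : ∑' lam : L, expQ τ₀ (Q lam) ≠ 0) :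
    ∃ (n : ℕ) (_ : 0 < n) (Q : QuadraticForm F (Fin n → F))
      (L : Submodule (𝓞 F) (Fin n → F)),
      L ≠ ⊥ ∧ L.FG ∧ Submodule.span F (L : Set (Fin n → F)) = ⊤ ∧
      (∀ x ∈ L, Q x ∈ invDiff F) ∧
      (∀ (σ : F →+* ℝ) (x : Fin n → F), x ≠ 0 → 0 < σ (Q x)) ∧
      ((L : Set (Fin n → F)) =
        {y : Fin n → F | ∀ x ∈ L, QuadraticMap.polar (⇑Q) y x ∈ invDiff F}) ∧
      (∑' lam : L, Complex.exp (2 * Real.pi * Complex.I *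
          ∑' σ : F →+* ℝ, ((σ (Q (lam : Fin n → F)) : ℝ) : ℂ) * τ₀ σ)) ≠ 0 := by
  let e : V ≃ₗ[F] (Fin (Module.finrank F V) → F) := (Module.finBasis F V).equivFun
  let e' : V ≃ₗ[𝓞 F] (Fin (Module.finrank F V) → F) := e.restrictScalars (𝓞 F)
  have hn : 0 < Module.finrank F V := Module.finrank_pos
  set L' := L.map (e' : V →ₗ[𝓞 F] (Fin (Module.finrank F V) → F)) with hL'
  set Q' : QuadraticForm F (Fin (Module.finrank F V) → F) :=
    Q.comp (e.symm : (Fin (Module.finrank F V) → F) →ₗ[F] V) with hQ'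
  have hmem : ∀ x, x ∈ L' ↔ e.symm x ∈ L := by
    intro x
    constructor
    · rintro ⟨v, hv, rfl⟩
      change e.symm (e v) ∈ L
      rwa [e.symm_apply_apply]
    · intro h
      exact ⟨_, h, e.apply_symm_apply x⟩
  have hQ : ∀ x, Q' x = Q (e.symm x) := fun x => rfl
  have hspan' : Submodule.span F (L' : Set (Fin (Module.finrank F V) → F)) = ⊤ := by
    have : (L' : Set (Fin (Module.finrank F V) → F)) = (e : V →ₗ[F] _) '' (L : Set V) := rfl
    rw [this, ← Submodule.map_span, hspan, Submodule.map_top, LinearMap.range_eq_top]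
    exact e.surjective
  have : Nonempty (Fin (Module.finrank F V)) := ⟨⟨0, hn⟩⟩
  refine ⟨_, hn, Q', L', ?_, hFG.map _, hspan', ?_, ?_, ?_, ?_⟩
  · intro h
    rw [h, Submodule.bot_coe, Submodule.span_zero_singleton] at hspan'
    exact bot_ne_top hspan'
  · intro x hx
    exact heven _ ((hmem x).1 hx)
  · intro σ x hx
    exact hpos σ _ (by simpa using hx)
  · have hpolar : ∀ x y, QuadraticMap.polar (⇑Q') x y =
        QuadraticMap.polar (⇑Q) (e.symm x) (e.symm y) := by
      intro x y
      simp only [QuadraticMap.polar, hQ, map_add]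
    ext y
    rw [SetLike.mem_coe, hmem, ← SetLike.mem_coe, hdual]
    simp only [Set.mem_ofPred_eq, hpolar]
    constructor
    · exact fun h x hx => h _ ((hmem x).1 hx)
    · intro h x hx
      have := h (e x) ((hmem _).2 (by simpa using hx))
      simpa using this
  · intro h0
    apply hθ
    rw [← h0]
    refine (Equiv.tsum_eq (e'.submoduleMap L).toEquiv (fun lam : L' => _)).symm.trans ?_ |>.symm
    refine tsum_congr fun lam => ?_
    rw [tsum_fintype, expQ]
    have : Q' ((e'.submoduleMap L).toEquiv lam) = Q lam := by
      rw [hQ]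
      congr 1
      exact e.symm_apply_apply _
    rw [this]

theorem qf_pos {ι : Type} [Fintype ι] [DecidableEq ι] {N : ℕ} (hN : 0 < N) (σ : F →+* ℝ)
    {v : (ι → F) × (ι → F)} (hv : v ≠ 0) : 0 < σ (qf F ι N v) := by
  have hN' : (0 : ℝ) < N := by exact_mod_cast hN
  have hnn : ∀ x : ι → F, 0 ≤ σ (x ⬝ᵥ x) := fun x => by
    rw [dotProduct, map_sum]
    exact Finset.sum_nonneg fun i _ => by rw [map_mul]; exact mul_self_nonneg _
  have hz : ∀ x : ι → F, σ (x ⬝ᵥ x) = 0 → x = 0 := fun x h => by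
    rw [dotProduct, map_sum, Finset.sum_eq_zero_iff_of_nonneg
      (fun i _ => by rw [map_mul]; exact mul_self_nonneg _)] at h
    funext i
    have := h i (Finset.mem_univ i)
    rw [map_mul, mul_self_eq_zero, map_eq_zero] at this
    exact this
  rw [qf_apply, map_mul, map_inv₀, map_mul, map_natCast, map_ofNat, map_add]
  have : 0 < σ (v.1 ⬝ᵥ v.1) + σ (v.2 ⬝ᵥ v.2) := by
    refine lt_of_le_of_ne (add_nonneg (hnn _) (hnn _)) fun h => hv ?_
    obtain ⟨h1, h2⟩ := (add_eq_zero_iff_of_nonneg (hnn _) (hnn _)).1 h.symm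
    exact Prod.ext (hz _ h1) (hz _ h2)
  positivity

end Conclusion

/-- Lemma 3.1 of the paper: the Hilbert theta series of totally positive even
ℤ-unimodular `O`-lattices have no common zero on `ℍ^d`. -/
theorem theta_series_no_common_zero
    (F : Type) [Field F] [NumberField F]
    (htr : Nat.card (F →+* ℝ) = Module.finrank ℚ F)
    (τ₀ : (F →+* ℝ) → ℂ) (hτ₀ : ∀ σ : F →+* ℝ, 0 < (τ₀ σ).im) :
    ∃ (n : ℕ) (_ : 0 < n) (Q : QuadraticForm F (Fin n → F))
      (L : Submodule (𝓞 F) (Fin n → F)),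
      -- `L` is a nonzero `O`-lattice: finitely generated and spanning over `F`
      L ≠ ⊥ ∧ L.FG ∧ Submodule.span F (L : Set (Fin n → F)) = ⊤ ∧
      -- even: `Q(L) ⊆ 𝔡^{-1}`
      (∀ x ∈ L, Q x ∈ invDiff F) ∧
      -- totally positive
      (∀ (σ : F →+* ℝ) (x : Fin n → F), x ≠ 0 → 0 < σ (Q x)) ∧
      -- ℤ-unimodular: `L = L'`
      ((L : Set (Fin n → F)) =
        {y : Fin n → F | ∀ x ∈ L, QuadraticMap.polar (⇑Q) y x ∈ invDiff F}) ∧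
      -- the theta series does not vanish at `τ₀`
      (∑' lam : L, Complex.exp (2 * Real.pi * Complex.I *
          ∑' σ : F →+* ℝ, ((σ (Q (lam : Fin n → F)) : ℝ) : ℂ) * τ₀ σ)) ≠ 0 := by
  by_contra H
  obtain ⟨k, _, _, d, A, hA, hne⟩ := exists_theta_bot_ne_zero htr hτ₀
  have : Fintype k := Fintype.ofFinite k
  refine hne (d.theta_bot_eq_zero htr hA hτ₀ fun m hm C hC => ?_)
  by_contra hθ
  have : Nonempty (Fin m) := ⟨⟨0, hm⟩⟩
  have hA' := d.simil_blk hA m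
  refine H (exists_of_space (LocalData.qf F (Fin 4 × Fin m) d.N) (d.lat _ hA' C)
    (d.lat_fg hA' C) (d.lat_span hA' C) (fun x hx => d.lat_even hA' hC hx)
    (fun σ x hx => qf_pos d.hN σ hx) (d.lat_dual hA' hC) fun h => hθ ?_)
  rw [LocalData.theta, ← h]
  exact (tsum_subtype (d.lat _ hA' C : Set _)
    (fun v => expQ τ₀ (LocalData.qf F (Fin 4 × Fin m) d.N v))).symm
end
end

section
/- Let s₀ > 1 and c > 0 be real numbers, and let â : (0,∞) → ℂ be continuously differentiable. Assume: (i) there is a constant C > 0 with |â(v)| ≤ C v^{−(s₀+1)/2} for all v ∈ (0,1]; and (ii) â(v) converges to a limit A ∈ ℂ as v → ∞. Then the integral ∫₀^∞ â(v) v^{s₀−1} e^{−cv} dv converges absolutely, and lim_{T→∞} ∫_{1/T}^{T} â'(v) · (1/Γ(s₀)) ( ∫₀^{cv} t^{s₀−1} e^{−t} dt ) dv = A − (c^{s₀}/Γ(s₀)) ∫₀^∞ â(v) v^{s₀−1} e^{−cv} dv. -/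
open MeasureTheory Filter

noncomputable section

/-!
Write `F v = Γ(s₀)⁻¹ ∫₀^{cv} t^{s₀-1} e^{-t} dt` and `g v = v^{s₀-1} e^{-cv}`. By the fundamental
theorem of calculus `F' = (c^{s₀} / Γ(s₀)) g` on `(0, ∞)`, so integration by parts on `[1/T, T]`
gives `∫ a' F = a(T) F(T) - a(1/T) F(1/T) - (c^{s₀} / Γ(s₀)) ∫ a g`. At infinity `F → 1` and `a → A`.
At zero `F v = O(v^{s₀})` while `a v = O(v^{-(s₀+1)/2})`, so `a F = O(v^{(s₀-1)/2}) → 0`, because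
`s₀ > 1`. The same bound gives `a g = O(v^{(s₀-3)/2})` near zero, which is integrable as
`(s₀-3)/2 > -1`; away from zero `a` is bounded and `g` is integrable. Hence the last integrals
converge to the integral over `(0, ∞)`.
-/

lemma integrableOn_gamma_integrand {s c : ℝ} (hs : 0 < s) (hc : 0 < c) :
    IntegrableOn (fun t : ℝ => t ^ (s - 1) * Real.exp (-(c * t))) (Set.Ioi 0) := by
  have h := integrableOn_rpow_mul_exp_neg_mul_rpow (p := 1) (s := s - 1) (b := c)
    (by linarith) one_pos hc
  simpa using h

lemma integrableOn_gamma_integrand_one {s : ℝ} (hs : 0 < s) :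
    IntegrableOn (fun t : ℝ => t ^ (s - 1) * Real.exp (-t)) (Set.Ioi 0) := by
  simpa using integrableOn_gamma_integrand hs one_pos

lemma setIntegral_gamma_integrand_bounds {s x : ℝ} (hs : 0 < s) (hx : 0 ≤ x) :
    0 ≤ (∫ t in Set.Ioc (0 : ℝ) x, t ^ (s - 1) * Real.exp (-t)) ∧
    (∫ t in Set.Ioc (0 : ℝ) x, t ^ (s - 1) * Real.exp (-t)) ≤ x ^ s / s := by
  constructor
  · refine setIntegral_nonneg measurableSet_Ioc fun t ht => ?_
    have := ht.1
    positivity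
  · have h1 : (∫ t in Set.Ioc (0 : ℝ) x, t ^ (s - 1)) = x ^ s / s := by
      rw [← intervalIntegral.integral_of_le hx, integral_rpow (Or.inl (by linarith))]
      simp [Real.zero_rpow hs.ne']
    rw [← h1]
    refine setIntegral_mono_on ((integrableOn_gamma_integrand_one hs).mono_set
      Set.Ioc_subset_Ioi_self) ?_ measurableSet_Ioc fun t ht => ?_
    · exact (intervalIntegrable_iff_integrableOn_Ioc_of_le hx).1
        (intervalIntegral.intervalIntegrable_rpow' (by linarith))
    · have := ht.1
      exact mul_le_of_le_one_right (by positivity) (Real.exp_le_one_iff.2 (by linarith))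

lemma hasDerivAt_setIntegral_gamma_integrand {s x : ℝ} (hs : 0 < s) (hx : 0 < x) :
    HasDerivAt (fun y : ℝ => ∫ t in Set.Ioc (0 : ℝ) y, t ^ (s - 1) * Real.exp (-t))
      (x ^ (s - 1) * Real.exp (-x)) x := by
  have hcont : ContinuousOn (fun t : ℝ => t ^ (s - 1) * Real.exp (-t)) (Set.Ioi 0) := by
    refine ContinuousOn.mul (fun t ht => ?_) (by fun_prop)
    exact (Real.continuousAt_rpow_const _ _ (Or.inl (ne_of_gt ht))).continuousWithinAt
  have h := intervalIntegral.integral_hasDerivAt_right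
    (f := fun t : ℝ => t ^ (s - 1) * Real.exp (-t)) (a := 0) (b := x)
    ((intervalIntegrable_iff_integrableOn_Ioc_of_le hx.le).2
      ((integrableOn_gamma_integrand_one hs).mono_set Set.Ioc_subset_Ioi_self))
    (hcont.stronglyMeasurableAtFilter isOpen_Ioi x hx)
    (hcont.continuousAt (Ioi_mem_nhds hx))
  refine h.congr_of_eventuallyEq ?_
  filter_upwards [Ioi_mem_nhds hx] with y hy
  rw [intervalIntegral.integral_of_le (le_of_lt hy)]

lemma tendsto_setIntegral_gamma_integrand {s : ℝ} (hs : 0 < s) :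
    Tendsto (fun y : ℝ => ∫ t in Set.Ioc (0 : ℝ) y, t ^ (s - 1) * Real.exp (-t)) atTop
      (nhds (Real.Gamma s)) := by
  have h := intervalIntegral_tendsto_integral_Ioi 0 (integrableOn_gamma_integrand_one hs)
    tendsto_id
  have e : Real.Gamma s = ∫ t in Set.Ioi (0 : ℝ), t ^ (s - 1) * Real.exp (-t) := by
    rw [Real.Gamma_eq_integral hs]
    simp_rw [mul_comm]
  rw [e]
  refine h.congr' ?_
  filter_upwards [eventually_ge_atTop 0] with y hy
  rw [id, intervalIntegral.integral_of_le hy]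

/-- A function that is continuous on `(0, ∞)` and converges at infinity is bounded on `[1, ∞)`. -/
lemma exists_bound_of_tendsto {a : ℝ → ℂ} {A : ℂ} (ha : ContinuousOn a (Set.Ioi 0))
    (hlim : Tendsto a atTop (nhds A)) : ∃ M : ℝ, ∀ v, 1 ≤ v → ‖a v‖ ≤ M := by
  obtain ⟨R, hR⟩ := eventually_atTop.1
    (hlim.norm.eventually (eventually_le_nhds (lt_add_one ‖A‖)))
  obtain ⟨K, hK⟩ := (isCompact_Icc (a := (1 : ℝ)) (b := R)).exists_bound_of_continuousOn
    (ha.mono fun x hx => lt_of_lt_of_le one_pos hx.1)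
  refine ⟨max K (‖A‖ + 1), fun v hv => ?_⟩
  rcases le_total v R with h | h
  · exact (hK v ⟨hv, h⟩).trans (le_max_left _ _)
  · exact (hR v h).trans (le_max_right _ _)

lemma integrableOn_mul_gamma_integrand {s c C : ℝ} (hs : 1 < s) (hc : 0 < c) {a : ℝ → ℂ} {A : ℂ}
    (ha : ContinuousOn a (Set.Ioi 0))
    (hbound : ∀ v : ℝ, 0 < v → v ≤ 1 → ‖a v‖ ≤ C * v ^ (-(s + 1) / 2))
    (hlim : Tendsto a atTop (nhds A)) :
    IntegrableOn (fun v : ℝ => a v * ((v ^ (s - 1) * Real.exp (-(c * v)) : ℝ) : ℂ))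
      (Set.Ioi (0 : ℝ)) := by
  have hg : ContinuousOn (fun v : ℝ => v ^ (s - 1) * Real.exp (-(c * v))) (Set.Ioi 0) := by
    refine ContinuousOn.mul (fun t ht => ?_) (by fun_prop)
    exact (Real.continuousAt_rpow_const _ _ (Or.inl (ne_of_gt ht))).continuousWithinAt
  have hf : ContinuousOn (fun v : ℝ => a v * ((v ^ (s - 1) * Real.exp (-(c * v)) : ℝ) : ℂ))
      (Set.Ioi 0) := ha.mul (Complex.continuous_ofReal.comp_continuousOn hg)
  have hm := hf.aestronglyMeasurable measurableSet_Ioi (μ := volume)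
  obtain ⟨M, hM⟩ := exists_bound_of_tendsto ha hlim
  rw [← Set.Ioc_union_Ioi_eq_Ioi (zero_le_one' ℝ), integrableOn_union]
  constructor
  · have hi : IntegrableOn (fun v : ℝ => C * v ^ ((s - 3) / 2)) (Set.Ioc 0 1) :=
      ((intervalIntegrable_iff_integrableOn_Ioc_of_le zero_le_one).1
        (intervalIntegral.intervalIntegrable_rpow' (by linarith))).const_mul C
    refine hi.mono' (hm.mono_set Set.Ioc_subset_Ioi_self) ?_
    refine (ae_restrict_mem measurableSet_Ioc).mono fun v hv => ?_
    have h0 : 0 < v := hv.1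
    rw [norm_mul, Complex.norm_real, Real.norm_of_nonneg (by positivity)]
    calc ‖a v‖ * (v ^ (s - 1) * Real.exp (-(c * v)))
        ≤ (C * v ^ (-(s + 1) / 2)) * (v ^ (s - 1) * 1) := by
          have h1 : Real.exp (-(c * v)) ≤ 1 :=
            Real.exp_le_one_iff.2 (neg_nonpos.2 (by positivity))
          exact mul_le_mul (hbound v h0 hv.2) (by gcongr) (by positivity)
            ((norm_nonneg _).trans (hbound v h0 hv.2))
      _ = C * v ^ ((s - 3) / 2) := by
          rw [mul_one, mul_assoc, ← Real.rpow_add h0]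
          ring_nf
  · have hsub : Set.Ioi (1 : ℝ) ⊆ Set.Ioi 0 := Set.Ioi_subset_Ioi zero_le_one
    have hi : IntegrableOn (fun v : ℝ => M * (v ^ (s - 1) * Real.exp (-(c * v)))) (Set.Ioi 1) :=
      ((integrableOn_gamma_integrand (by linarith) hc).mono_set hsub).const_mul M
    refine hi.mono' (hm.mono_set hsub) ?_
    refine (ae_restrict_mem measurableSet_Ioi).mono fun v hv => ?_
    have h0 : 0 < v := hsub hv
    rw [norm_mul, Complex.norm_real, Real.norm_of_nonneg (by positivity)]
    exact mul_le_mul_of_nonneg_right (hM v (le_of_lt hv)) (by positivity)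

lemma tendsto_intervalIntegral_one_div {f : ℝ → ℂ} (hf : IntegrableOn f (Set.Ioi 0)) :
    Tendsto (fun T : ℝ => ∫ v in (1 / T)..T, f v) atTop (nhds (∫ v in Set.Ioi (0 : ℝ), f v)) := by
  have hcov : AECover (volume.restrict (Set.Ioi (0 : ℝ))) atTop
      (fun T : ℝ => Set.Ioc (1 / T) T) := by
    refine ⟨(ae_restrict_mem measurableSet_Ioi).mono fun v hv => ?_, fun _ => measurableSet_Ioc⟩
    have hv0 : 0 < v := hv
    filter_upwards [eventually_ge_atTop v, eventually_gt_atTop (1 / v)] with T h1 h2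
    exact ⟨(one_div_lt (hv0.trans_le h1) hv0).2 h2, h1⟩
  refine (hcov.integral_tendsto_of_countably_generated hf).congr' ?_
  filter_upwards [eventually_ge_atTop 1] with T hT
  have hT0 : 0 < T := one_pos.trans_le hT
  have h1 : 1 / T ≤ T := ((div_le_one hT0).2 hT).trans hT
  rw [intervalIntegral.integral_of_le h1, Measure.restrict_restrict measurableSet_Ioc,
    Set.inter_eq_left.2]
  exact fun x hx => lt_trans (by positivity) hx.1

/-- The integration-by-parts evaluation underlying the Stokes-theorem
computation in Lemma 4.6 of the paper. -/
theorem incomplete_gamma_integration_by_parts (s₀ c : ℝ) (hs₀ : 1 < s₀) (hc : 0 < c)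
    (a : ℝ → ℂ) (ha : ContDiffOn ℝ 1 a (Set.Ioi (0 : ℝ)))
    (A : ℂ)
    (hbound : ∃ C : ℝ, 0 < C ∧ ∀ v : ℝ, 0 < v → v ≤ 1 →
      ‖a v‖ ≤ C * v ^ (-(s₀ + 1) / 2))
    (hlim : Tendsto a atTop (nhds A)) :
    MeasureTheory.IntegrableOn
      (fun v : ℝ => a v * ((v ^ (s₀ - 1) * Real.exp (-(c * v)) : ℝ) : ℂ))
      (Set.Ioi (0 : ℝ)) ∧
    Tendsto
      (fun T : ℝ => ∫ v in (1 / T)..T,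
        deriv a v * ((((Real.Gamma s₀)⁻¹ *
          ∫ t in Set.Ioc (0 : ℝ) (c * v), t ^ (s₀ - 1) * Real.exp (-t) : ℝ)) : ℂ))
      atTop
      (nhds (A - (((c ^ s₀ / Real.Gamma s₀ : ℝ)) : ℂ) *
        ∫ v in Set.Ioi (0 : ℝ),
          a v * ((v ^ (s₀ - 1) * Real.exp (-(c * v)) : ℝ) : ℂ))) := by
  obtain ⟨C, hC, hb⟩ := hbound
  have hs : 0 < s₀ := by linarith
  have hΓ : 0 < Real.Gamma s₀ := Real.Gamma_pos_of_pos hs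
  have hint := integrableOn_mul_gamma_integrand hs₀ hc ha.continuousOn hb hlim
  refine ⟨hint, ?_⟩
  set F : ℝ → ℝ := fun v => (Real.Gamma s₀)⁻¹ *
    ∫ t in Set.Ioc (0 : ℝ) (c * v), t ^ (s₀ - 1) * Real.exp (-t) with hF
  set g : ℝ → ℝ := fun v => v ^ (s₀ - 1) * Real.exp (-(c * v)) with hg
  have hF' : ∀ v, 0 < v → HasDerivAt (fun v => (F v : ℂ))
      (((c ^ s₀ / Real.Gamma s₀ : ℝ) : ℂ) * (g v : ℂ)) v := by
    intro v hv
    have h := ((hasDerivAt_setIntegral_gamma_integrand hs (mul_pos hc hv)).comp v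
      ((hasDerivAt_id v).const_mul c)).const_mul (Real.Gamma s₀)⁻¹
    have h2 : HasDerivAt F (c ^ s₀ / Real.Gamma s₀ * g v) v := by
      refine h.congr_deriv ?_
      have e : c ^ s₀ = c ^ (s₀ - 1) * c := by
        rw [← Real.rpow_add_one hc.ne', sub_add_cancel]
      simp only [hg, e, Real.mul_rpow hc.le hv.le]
      ring
    exact_mod_cast h2.ofReal_comp
  have hFtop : Tendsto (fun v => (F v : ℂ)) atTop (nhds 1) := by
    have h := ((tendsto_setIntegral_gamma_integrand hs).comp
      (tendsto_id.const_mul_atTop hc)).const_mul (Real.Gamma s₀)⁻¹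
    rw [inv_mul_cancel₀ hΓ.ne'] at h
    exact_mod_cast (Complex.continuous_ofReal.tendsto (1 : ℝ)).comp h
  have hinv : Tendsto (fun T : ℝ => 1 / T) atTop (nhds 0) := by
    simpa using tendsto_inv_atTop_zero (𝕜 := ℝ)
  have hzero : Tendsto (fun T : ℝ => (F (1 / T) : ℂ) * a (1 / T)) atTop (nhds 0) := by
    have hp : Tendsto (fun T : ℝ => ((Real.Gamma s₀)⁻¹ * (c ^ s₀ / s₀) * C) *
        (1 / T) ^ ((s₀ - 1) / 2)) atTop (nhds 0) := by
      have h := (hinv.rpow_const (p := (s₀ - 1) / 2) (Or.inr (by linarith))).const_mul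
        ((Real.Gamma s₀)⁻¹ * (c ^ s₀ / s₀) * C)
      rwa [Real.zero_rpow (by linarith), mul_zero] at h
    refine squeeze_zero_norm' ?_ hp
    filter_upwards [eventually_ge_atTop 1] with T hT
    have hT0 : 0 < T := one_pos.trans_le hT
    have hv : 0 < 1 / T := by positivity
    have hv1 : 1 / T ≤ 1 := (div_le_one hT0).2 hT
    generalize 1 / T = v at hv hv1
    obtain ⟨l, u⟩ := setIntegral_gamma_integrand_bounds hs (mul_pos hc hv).le
    have hF0 : 0 ≤ F v := mul_nonneg (by positivity) l
    have hFu : F v ≤ (Real.Gamma s₀)⁻¹ * ((c * v) ^ s₀ / s₀) :=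
      mul_le_mul_of_nonneg_left u (by positivity)
    rw [norm_mul, Complex.norm_real, Real.norm_of_nonneg hF0]
    calc F v * ‖a v‖
        ≤ ((Real.Gamma s₀)⁻¹ * ((c * v) ^ s₀ / s₀)) * (C * v ^ (-(s₀ + 1) / 2)) :=
          mul_le_mul hFu (hb v hv hv1) (norm_nonneg _) (hF0.trans hFu)
      _ = ((Real.Gamma s₀)⁻¹ * (c ^ s₀ / s₀) * C) * (v ^ s₀ * v ^ (-(s₀ + 1) / 2)) := by
          rw [Real.mul_rpow hc.le hv.le]
          ring
      _ = _ := by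
          rw [← Real.rpow_add hv]
          ring_nf
  have hlim_parts : Tendsto (fun T : ℝ => (F T : ℂ) * a T - (F (1 / T) : ℂ) * a (1 / T) -
      ((c ^ s₀ / Real.Gamma s₀ : ℝ) : ℂ) * ∫ v in (1 / T)..T, a v * (g v : ℂ)) atTop
      (nhds (A - ((c ^ s₀ / Real.Gamma s₀ : ℝ) : ℂ) *
        ∫ v in Set.Ioi (0 : ℝ), a v * (g v : ℂ))) := by
    have h := ((hFtop.mul hlim).sub hzero).sub
      ((tendsto_intervalIntegral_one_div hint).const_mul ((c ^ s₀ / Real.Gamma s₀ : ℝ) : ℂ))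
    rwa [one_mul, sub_zero] at h
  refine hlim_parts.congr' ?_
  filter_upwards [eventually_ge_atTop 1] with T hT
  have hT0 : 0 < T := one_pos.trans_le hT
  have hsub : Set.uIcc (1 / T) T ⊆ Set.Ioi 0 := fun x hx =>
    lt_of_lt_of_le (lt_min (by positivity) hT0) hx.1
  have hgc : ContinuousOn (fun v => (g v : ℂ)) (Set.Ioi 0) := by
    refine Complex.continuous_ofReal.comp_continuousOn ?_
    refine ContinuousOn.mul (fun t ht => ?_) (by fun_prop)
    exact (Real.continuousAt_rpow_const _ _ (Or.inl (ne_of_gt ht))).continuousWithinAt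
  have hparts := intervalIntegral.integral_mul_deriv_eq_deriv_mul (a := 1 / T) (b := T)
    (u := fun v => (F v : ℂ)) (v := a) (v' := deriv a)
    (fun x hx => hF' x (hsub hx))
    (fun x hx => ((ha.differentiableOn one_ne_zero).differentiableAt
      (Ioi_mem_nhds (hsub hx))).hasDerivAt)
    ((continuousOn_const.mul (hgc.mono hsub)).intervalIntegrable)
    (((ha.continuousOn_deriv_of_isOpen isOpen_Ioi le_rfl).mono hsub).intervalIntegrable)
  have e1 : (∫ v in (1 / T)..T, deriv a v * (F v : ℂ)) =
      ∫ v in (1 / T)..T, (F v : ℂ) * deriv a v := by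
    simp_rw [mul_comm]
  have e2 : (∫ v in (1 / T)..T, ((c ^ s₀ / Real.Gamma s₀ : ℝ) : ℂ) * (g v : ℂ) * a v) =
      ((c ^ s₀ / Real.Gamma s₀ : ℝ) : ℂ) * ∫ v in (1 / T)..T, a v * (g v : ℂ) := by
    rw [← intervalIntegral.integral_const_mul]
    congr 1
    ext v
    ring
  rw [e1, hparts, e2]
end
end
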